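/- Fix constants $c$, $C$, and $\gamma$ with $0 < c < 1/2$, $C > 1$, $\gamma > 0$, $\gamma < (1 - 2c)^2/2$, and $\gamma < (C-1)^2/2 - (C-1)^3/6$. For each $n \geq 1$, consider a uniformly random preference profile for $n$ girls and $n$ boys, and let $H_n$ be the number of stable husbands of a fixed girl (say girl $0$). Then there is a constant $K > 0$ such that for all $n \geq 2$, $\Pr\bigl(H_n < c \ln n \text{ or } H_n > C \ln n\bigr) \leq K\, n^{-\gamma}$. -/

import Mathlib

/-- A preference profile for `n` girls and `n` boys: each girl `g` ranks the
boys via a bijection `P.1 g : Fin n ≃ Fin n` (boy `b` occupies position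
`P.1 g b`, position `0` being her favorite), and each boy `b` ranks the girls
via `P.2 b`. -/
abbrev PrefProfile (n : ℕ) := (Fin n → Equiv.Perm (Fin n)) × (Fin n → Equiv.Perm (Fin n))

/-- Girl `g` strictly prefers boy `b` to boy `b'`. -/
def GirlPrefers {n : ℕ} (P : PrefProfile n) (g b b' : Fin n) : Prop := P.1 g b < P.1 g b'

/-- Boy `b` strictly prefers girl `g` to girl `g'`. -/
def BoyPrefers {n : ℕ} (P : PrefProfile n) (b g g' : Fin n) : Prop := P.2 b g < P.2 b g'

/-- A matching `M` (pairing girl `g` with boy `M g`) is stable if no girl `g`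
and boy `b` who are not matched to each other prefer each other to their
current partners. -/
def IsStableMatching {n : ℕ} (P : PrefProfile n) (M : Fin n ≃ Fin n) : Prop :=
  ¬ ∃ g b, b ≠ M g ∧ GirlPrefers P g b (M g) ∧ BoyPrefers P b g (M.symm b)

/-- The number of stable husbands of girl `g`: the number of boys `b` such that
some stable matching pairs `g` with `b`. -/
noncomputable def stableHusbandCount (n : ℕ) (P : PrefProfile n) (g : Fin n) : ℕ :=
  Nat.card {b : Fin n // ∃ M : Fin n ≃ Fin n, IsStableMatching P M ∧ M g = b}

section HelperA
open Finset BigOperators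

/-- Uniform average. -/
noncomputable def avg {α : Type*} [Fintype α] (f : α → ℝ) : ℝ := (∑ x, f x) / Fintype.card α

lemma avg_mono {α : Type*} [Fintype α] {f g : α → ℝ} (h : ∀ x, f x ≤ g x) : avg f ≤ avg g := by
  unfold avg
  gcongr with x
  exact h x

lemma avg_nonneg {α : Type*} [Fintype α] {f : α → ℝ} (h : ∀ x, 0 ≤ f x) : 0 ≤ avg f := by
  unfold avg
  exact div_nonneg (Finset.sum_nonneg fun x _ => h x) (by positivity)

lemma avg_const {α : Type*} [Fintype α] [Nonempty α] (c : ℝ) : avg (fun _ : α => c) = c := by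
  unfold avg
  simp

lemma avg_const_mul {α : Type*} [Fintype α] (c : ℝ) (f : α → ℝ) :
    avg (fun x => c * f x) = c * avg f := by
  unfold avg
  rw [← Finset.mul_sum, mul_div_assoc]

lemma avg_add {α : Type*} [Fintype α] (f g : α → ℝ) :
    avg (fun x => f x + g x) = avg f + avg g := by
  unfold avg
  rw [Finset.sum_add_distrib, add_div]

lemma avg_sum {α κ : Type*} [Fintype α] (s : Finset κ) (f : κ → α → ℝ) :
    avg (fun x => ∑ k ∈ s, f k x) = ∑ k ∈ s, avg (f k) := by
  unfold avg
  rw [Finset.sum_comm, Finset.sum_div]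

lemma avg_prod {α β : Type*} [Fintype α] [Fintype β] (f : α × β → ℝ) :
    avg f = avg (fun a => avg (fun b => f (a, b))) := by
  unfold avg
  rw [Fintype.sum_prod_type, Fintype.card_prod, ← Finset.sum_div, div_div, mul_comm (Fintype.card α)]
  push_cast
  rfl

lemma avg_prod_left {α β : Type*} [Fintype α] [Fintype β] (f : α × β → ℝ) :
    avg f = avg (fun b => avg (fun a => f (a, b))) := by
  unfold avg
  rw [Fintype.sum_prod_type_right, Fintype.card_prod, ← Finset.sum_div, div_div]
  push_cast
  rfl

lemma avg_pi {ι α : Type*} [Fintype ι] [DecidableEq ι] [Fintype α] (f : ι → α → ℝ) :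
    avg (fun x : ι → α => ∏ i, f i (x i)) = ∏ i, avg (f i) := by
  unfold avg
  rw [Finset.prod_div_distrib, Finset.prod_univ_sum, Fintype.piFinset_univ]
  simp

lemma avg_equiv {α β : Type*} [Fintype α] [Fintype β] (e : α ≃ β) (f : β → ℝ) :
    avg (fun x => f (e x)) = avg f := by
  unfold avg
  rw [Equiv.sum_comp e f, Fintype.card_congr e]

/-- Resampling one coordinate. -/
lemma avg_update {ι α : Type*} [Fintype ι] [DecidableEq ι] [Fintype α] [Nonempty α] (i : ι)
    (f : (ι → α) → ℝ) :
    avg f = avg (fun x => avg (fun a => f (Function.update x i a))) := by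
  have h1 : avg (fun x : ι → α => avg (fun a => f (Function.update x i a))) =
      avg (fun q : (ι → α) × α => f (Function.update q.1 i q.2)) := by
    rw [avg_prod]
  rw [h1]
  let e : ((ι → α) × α) ≃ ((ι → α) × α) :=
    { toFun := fun q => (Function.update q.1 i q.2, q.1 i)
      invFun := fun q => (Function.update q.1 i q.2, q.1 i)
      left_inv := fun q => by simp
      right_inv := fun q => by simp }
  have h2 : (fun q : (ι → α) × α => f (Function.update q.1 i q.2)) =
      fun q => (fun r : (ι → α) × α => f r.1) (e q) := by
    funext q; rfl
  rw [h2, avg_equiv e (fun r : (ι → α) × α => f r.1), avg_prod]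
  congr 1
  funext x
  exact (avg_const (α := α) (f x)).symm

open Classical in
lemma avg_min {n : ℕ} (b : Fin n) (D : Finset (Fin n)) (hb : b ∉ D) :
    avg (fun σ : Equiv.Perm (Fin n) => if ∀ a ∈ D, σ b < σ a then (1 : ℝ) else 0) =
      1 / ((D.card : ℝ) + 1) := by
  set S := insert b D with hS
  let F : Fin n → Equiv.Perm (Fin n) → ℝ := fun c σ => if ∀ a ∈ S, a ≠ c → σ c < σ a then 1 else 0
  have hF : ∀ c ∈ S, avg (F c) = avg (F b) := by
    intro c hc
    rw [← avg_equiv (Equiv.mulRight (Equiv.swap b c)) (F c)]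
    congr 1
    funext σ
    have : (∀ a ∈ S, a ≠ c → (σ * Equiv.swap b c) c < (σ * Equiv.swap b c) a) ↔
        (∀ a ∈ S, a ≠ b → σ b < σ a) := by
      have hbS : b ∈ S := by simp [hS]
      have hm : ∀ a ∈ S, Equiv.swap b c a ∈ S := by
        intro a ha
        rw [Equiv.swap_apply_def]; split_ifs <;> assumption
      simp only [Equiv.Perm.mul_apply, Equiv.swap_apply_right]
      constructor
      · intro h a ha hab
        have := h (Equiv.swap b c a) (hm a ha) (by
          intro h'; apply hab
          have := congrArg (Equiv.swap b c) h'
          simpa using this)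
        simpa using this
      · intro h a ha hac
        exact h _ (hm a ha) (by
          intro h'; apply hac
          have := congrArg (Equiv.swap b c) h'
          simpa using this)
    simp only [F, Equiv.coe_mulRight]
    simp only [this]
  have hsum : ∑ c ∈ S, avg (F c) = 1 := by
    rw [← avg_sum, ← avg_const (α := Equiv.Perm (Fin n)) 1]
    congr 1
    funext σ
    obtain ⟨c, hc, hmin⟩ := Finset.exists_min_image S σ ⟨b, by simp [hS]⟩
    rw [Finset.sum_eq_single c]
    · simp only [F]
      rw [if_pos]
      intro a ha hac
      exact lt_of_le_of_ne (hmin a ha) (fun h => hac (σ.injective h.symm))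
    · intro d hd hdc
      simp only [F]
      rw [if_neg]
      intro h
      exact absurd (h c hc (Ne.symm hdc)) (not_lt.mpr (hmin d hd))
    · intro h; exact absurd hc h
  rw [Finset.sum_congr rfl hF, Finset.sum_const, nsmul_eq_mul] at hsum
  have hcard : (S.card : ℝ) = D.card + 1 := by rw [hS, Finset.card_insert_of_notMem hb]; push_cast; rfl
  have hFb : F b = fun σ : Equiv.Perm (Fin n) => if ∀ a ∈ D, σ b < σ a then (1 : ℝ) else 0 := by
    funext σ
    simp only [F]
    congr 1
    apply propext
    constructor
    · intro h a ha
      exact h a (by simp [hS, ha]) (by rintro rfl; exact hb ha)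
    · intro h a ha hab
      exact h a (by simpa [hS, hab] using ha)
  rw [← hFb, ← hcard, eq_div_iff (by rw [hcard]; positivity), mul_comm]
  exact hsum

end HelperA

section HelperB
open Finset BigOperators

/-- `i` is a left-to-right minimum of `π`. -/
def IsRec {n : ℕ} (π : Equiv.Perm (Fin n)) (i : Fin n) : Prop := ∀ k, k < i → π i < π k

/-- Insert a last value. -/
def insLast {n : ℕ} (q : Fin (n + 1) × Equiv.Perm (Fin n)) : Equiv.Perm (Fin (n + 1)) :=
  (finSuccEquiv' (Fin.last n)).trans ((Equiv.optionCongr q.2).trans (finSuccEquiv' q.1).symm)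

lemma insLast_last {n : ℕ} (q : Fin (n + 1) × Equiv.Perm (Fin n)) :
    insLast q (Fin.last n) = q.1 := by
  simp [insLast]

lemma insLast_castSucc {n : ℕ} (q : Fin (n + 1) × Equiv.Perm (Fin n)) (i : Fin n) :
    insLast q i.castSucc = q.1.succAbove (q.2 i) := by
  have : finSuccEquiv' (Fin.last n) i.castSucc = some i := by
    rw [← Fin.succAbove_last_apply, finSuccEquiv'_succAbove]
  simp [insLast, this]

lemma insLast_bij {n : ℕ} : Function.Bijective (insLast (n := n)) := by
  rw [Fintype.bijective_iff_injective_and_card]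
  constructor
  · intro q r h
    have h1 : q.1 = r.1 := by
      rw [← insLast_last q, ← insLast_last r, h]
    refine Prod.ext h1 ?_
    ext i
    have h2 := insLast_castSucc q i
    rw [h, insLast_castSucc r i, h1] at h2
    rw [Fin.succAbove_right_injective h2]
  · simp [Fintype.card_perm, Nat.factorial_succ]

lemma isRec_castSucc {n : ℕ} (q : Fin (n + 1) × Equiv.Perm (Fin n)) (i : Fin n) :
    IsRec (insLast q) i.castSucc ↔ IsRec q.2 i := by
  constructor
  · intro h k hk
    have := h k.castSucc (by simpa using hk)
    rw [insLast_castSucc, insLast_castSucc] at this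
    exact (Fin.strictMono_succAbove q.1).lt_iff_lt.mp this
  · intro h k hk
    have hkl : k ≠ Fin.last n := by
      rintro rfl
      exact absurd hk (not_lt.mpr (Fin.le_last _))
    obtain ⟨k', rfl⟩ := Fin.exists_castSucc_eq.mpr hkl
    rw [insLast_castSucc, insLast_castSucc]
    exact (Fin.strictMono_succAbove q.1) (h k' (by simpa using hk))

lemma isRec_last {n : ℕ} (q : Fin (n + 1) × Equiv.Perm (Fin n)) :
    IsRec (insLast q) (Fin.last n) ↔ q.1 = 0 := by
  constructor
  · intro h
    by_contra hq
    obtain ⟨k, hk⟩ := (insLast q).surjective 0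
    have hkl : k ≠ Fin.last n := by
      rintro rfl
      rw [insLast_last] at hk
      exact hq hk
    have := h k (Fin.lt_last_iff_ne_last.mpr hkl)
    rw [hk] at this
    exact absurd this (not_lt.mpr (Fin.zero_le _))
  · intro h k hk
    rw [insLast_last, h]
    refine Fin.pos_iff_ne_zero.mpr ?_
    intro h0
    have : insLast q k = insLast q (Fin.last n) := by rw [insLast_last, h, h0]
    exact hk.ne ((insLast q).injective this)

open Classical in
lemma avg_rec (n : ℕ) (z : ℕ → ℝ) :
    avg (fun π : Equiv.Perm (Fin n) => ∏ i : Fin n, if IsRec π i then z i else 1) =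
      ∏ i ∈ Finset.range n, (1 + (z i - 1) / (i + 1)) := by
  induction n with
  | zero => simp [avg]
  | succ n ih =>
    rw [← avg_equiv (Equiv.ofBijective _ (insLast_bij (n := n)))
      (fun π : Equiv.Perm (Fin (n + 1)) => ∏ i : Fin (n + 1), if IsRec π i then z i else 1)]
    rw [avg_prod, Finset.prod_range_succ, ← ih]
    have h1 : ∀ v : Fin (n + 1), avg (fun π : Equiv.Perm (Fin n) => ∏ i : Fin (n + 1),
        if IsRec ((Equiv.ofBijective _ (insLast_bij (n := n))) (v, π)) i then z i else 1) =
        (if v = 0 then z n else 1) *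
          avg (fun π : Equiv.Perm (Fin n) => ∏ i : Fin n, if IsRec π i then z i else 1) := by
      intro v
      rw [← avg_const_mul]
      congr 1
      funext π
      rw [Fin.prod_univ_castSucc, mul_comm]
      simp only [Equiv.ofBijective_apply, isRec_castSucc, isRec_last, Fin.val_last, Fin.val_castSucc]
    simp only [h1]
    have h2 : (fun v : Fin (n + 1) => (if v = 0 then z n else 1) *
          avg (fun π : Equiv.Perm (Fin n) => ∏ i : Fin n, if IsRec π i then z i else 1)) =
        fun v => avg (fun π : Equiv.Perm (Fin n) => ∏ i : Fin n, if IsRec π i then z i else 1) *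
          (if v = 0 then z n else 1) := by
      funext v; rw [mul_comm]
    rw [h2, avg_const_mul]
    congr 1
    unfold avg
    rw [Fin.sum_univ_succ]
    simp [Fin.succ_ne_zero]
    field_simp
    ring

end HelperB

section HelperC
open Finset BigOperators

section process
variable {n : ℕ}

/-- States of the proposal process in which girl `z` rejects everybody. -/
inductive Reach (z : Fin n) (B G : Fin n → Equiv.Perm (Fin n)) :
    (Fin n → ℕ) → List (Fin n) → List (Fin n) → Prop
  | start : Reach z B G (fun _ => 0) [] []
  | conf {p : Fin n → ℕ} {t1 t2 : List (Fin n)} (a a' j : Fin n) (h : Reach z B G p t1 t2)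
      (hj : j ≠ z) (ha : (B a j : ℕ) = p a) (ha' : (B a' j : ℕ) = p a') (hlt : G j a' < G j a) :
      Reach z B G (Function.update p a (p a + 1)) t1 t2
  | zero1 {p : Fin n → ℕ} {t1 : List (Fin n)} (b : Fin n) (h : Reach z B G p t1 [])
      (hb : (B b z : ℕ) = p b) : Reach z B G (Function.update p b (p b + 1)) (t1 ++ [b]) []
  | zero2 {p : Fin n → ℕ} {t1 t2 : List (Fin n)} (M : Fin n ≃ Fin n) (h : Reach z B G p t1 t2)
      (hM : ∀ g, (B (M g) g : ℕ) = p (M g)) :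
      Reach z B G (Function.update p (M z) (p (M z) + 1)) t1 (t2 ++ [M z])

lemma pos_inj (B : Fin n → Equiv.Perm (Fin n)) {a i j : Fin n} (h : (B a i : ℕ) = B a j) : i = j :=
  (B a).injective (Fin.ext h)

lemma upd_lt_iff (p : Fin n → ℕ) (b a : Fin n) (k : ℕ) :
    k < Function.update p b (p b + 1) a ↔ k < p a ∨ (a = b ∧ k = p b) := by
  by_cases h : a = b
  · subst h; simp; omega
  · simp [h]

/-- passed girls are held by better boys -/
lemma Reach.inv {z : Fin n} {B G : Fin n → Equiv.Perm (Fin n)} {p : Fin n → ℕ}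
    {t1 t2 : List (Fin n)} (h : Reach z B G p t1 t2) :
    ∀ a j, j ≠ z → (B a j : ℕ) < p a → ∃ a', (B a' j : ℕ) = p a' ∧ G j a' < G j a := by
  have key : ∀ (p : Fin n → ℕ) (b : Fin n), (B b z : ℕ) = p b →
      (∀ a j, j ≠ z → (B a j : ℕ) < p a → ∃ a', (B a' j : ℕ) = p a' ∧ G j a' < G j a) →
      ∀ a j, j ≠ z → (B a j : ℕ) < Function.update p b (p b + 1) a →
        ∃ a', (B a' j : ℕ) = Function.update p b (p b + 1) a' ∧ G j a' < G j a := by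
    intro p b hb ih a j hj hlt
    rw [upd_lt_iff] at hlt
    rcases hlt with hlt | ⟨rfl, hlt⟩
    · obtain ⟨a', h1, h2⟩ := ih a j hj hlt
      refine ⟨a', ?_, h2⟩
      rw [Function.update_of_ne]
      · exact h1
      · rintro rfl
        rw [← hb] at h1
        exact hj (pos_inj B h1)
    · rw [← hb] at hlt
      exact absurd (pos_inj B hlt) hj
  induction h with
  | start => intro a j _ h; simp at h
  | @conf p t1 t2 a a' j h hj ha ha' hlt ih =>
    have haa : a' ≠ a := by rintro rfl; exact lt_irrefl _ hlt
    intro c i hi hc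
    rw [upd_lt_iff] at hc
    have hc' : ∃ a'', (B a'' i : ℕ) = p a'' ∧ G i a'' < G i c ∨ (i = j ∧ c = a) := by
      rcases hc with hc | ⟨rfl, hc⟩
      · obtain ⟨x, hx⟩ := ih c i hi hc
        exact ⟨x, Or.inl hx⟩
      · rw [← ha] at hc
        exact ⟨c, Or.inr ⟨pos_inj B hc, rfl⟩⟩
    obtain ⟨x, hx | ⟨rfl, rfl⟩⟩ := hc'
    · by_cases hxa : x = a
      · subst hxa
        have : i = j := pos_inj B (hx.1.trans ha.symm)
        subst this
        exact ⟨a', by rw [Function.update_of_ne haa]; exact ha', hlt.trans hx.2⟩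
      · exact ⟨x, by rw [Function.update_of_ne hxa]; exact hx.1, hx.2⟩
    · exact ⟨a', by rw [Function.update_of_ne haa]; exact ha', hlt⟩
  | zero1 b h hb ih => exact key _ b hb ih
  | zero2 M h hM ih => exact key _ (M z) (hM z) ih

lemma Reach.mem {z : Fin n} {B G : Fin n → Equiv.Perm (Fin n)} {p : Fin n → ℕ}
    {t1 t2 : List (Fin n)} (h : Reach z B G p t1 t2) :
    (∀ a, a ∈ t1 ++ t2 ↔ (B a z : ℕ) < p a) ∧ (t1 ++ t2).Nodup := by
  have key : ∀ (p : Fin n → ℕ) (b : Fin n) (t : List (Fin n)), (B b z : ℕ) = p b →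
      ((∀ a, a ∈ t ↔ (B a z : ℕ) < p a) ∧ t.Nodup) →
      (∀ a, a ∈ t ++ [b] ↔ (B a z : ℕ) < Function.update p b (p b + 1) a) ∧ (t ++ [b]).Nodup := by
    intro p b t hb ih
    constructor
    · intro a
      rw [upd_lt_iff, List.mem_append, ih.1 a]
      simp only [List.mem_singleton]
      constructor
      · rintro (h | rfl)
        · exact Or.inl h
        · exact Or.inr ⟨rfl, hb⟩
      · rintro (h | ⟨h, _⟩)
        · exact Or.inl h
        · exact Or.inr h
    · rw [List.nodup_append]
      refine ⟨ih.2, by simp, ?_⟩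
      intro a ha c hc
      simp at hc
      subst hc
      rintro rfl
      have := (ih.1 a).1 ha
      omega
  induction h with
  | start => simp
  | @conf p t1 t2 a a' j h hj ha ha' hlt ih =>
    refine ⟨?_, ih.2⟩
    intro c
    rw [ih.1 c, upd_lt_iff]
    constructor
    · exact Or.inl
    · rintro (h | ⟨rfl, h⟩)
      · exact h
      · rw [← ha] at h
        exact absurd (pos_inj B h) (Ne.symm hj)
  | zero1 b h hb ih =>
    simp only [List.append_nil] at ih ⊢
    exact key _ b _ hb ih
  | zero2 M h hM ih =>
    rw [← List.append_assoc]
    exact key _ (M z) _ (hM z) ih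

lemma Reach.upper {z : Fin n} {B G : Fin n → Equiv.Perm (Fin n)} {p : Fin n → ℕ}
    {t1 t2 : List (Fin n)} (h : Reach z B G p t1 t2) (s : Equiv.Perm (Fin n)) (M : Fin n ≃ Fin n)
    (hM : IsStableMatching (Function.update G z s, B) M) :
    (∀ a, p a ≤ (B a (M.symm a) : ℕ)) ∨
      ∃ l r, t1 ++ t2 = l ++ M z :: r ∧ ∀ a ∈ l, s (M z) < s a := by
  have key : ∀ (p : Fin n → ℕ) (b : Fin n) (t : List (Fin n)), (B b z : ℕ) = p b →
      (∀ a, a ∈ t ↔ (B a z : ℕ) < p a) →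
      ((∀ a, p a ≤ (B a (M.symm a) : ℕ)) ∨ ∃ l r, t = l ++ M z :: r ∧ ∀ a ∈ l, s (M z) < s a) →
      ((∀ a, Function.update p b (p b + 1) a ≤ (B a (M.symm a) : ℕ)) ∨
        ∃ l r, t ++ [b] = l ++ M z :: r ∧ ∀ a ∈ l, s (M z) < s a) := by
    intro p b t hb hmem ih
    rcases ih with ih | ⟨l, r, h1, h2⟩
    · by_cases hbM : b = M z
      · right
        refine ⟨t, [], by rw [hbM], ?_⟩
        intro a ha
        have h1 := (hmem a).1 ha
        have h2 := ih a
        have hne : a ≠ M z := by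
          rintro rfl
          rw [← hbM, hb] at h1
          exact lt_irrefl _ h1
        by_contra hcon
        apply hM
        refine ⟨z, a, hne, ?_, ?_⟩
        · simp only [GirlPrefers, Function.update_self]
          exact lt_of_le_of_ne (not_lt.mp hcon) (fun h => hne (s.injective h))
        · simp only [BoyPrefers]
          exact Fin.lt_def.mpr (lt_of_lt_of_le h1 h2)
      · left
        intro a
        by_cases hab : a = b
        · subst hab
          rw [Function.update_self]
          refine lt_of_le_of_ne (ih a) ?_
          rw [← hb]
          intro h
          apply hbM
          rw [pos_inj B h]; simp
        · rw [Function.update_of_ne hab]; exact ih a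
    · right
      exact ⟨l, r ++ [b], by rw [h1]; simp, h2⟩
  induction h with
  | start => left; intro a; simp
  | @conf p t1 t2 a a' j h hj ha ha' hlt ih =>
    rcases ih with ih | ih
    · left
      intro c
      by_cases hca : c = a
      · subst hca
        rw [Function.update_self]
        refine lt_of_le_of_ne (ih c) ?_
        rw [← ha]
        intro h
        have hjc : M j = c := by rw [pos_inj B h]; simp
        have hne : a' ≠ c := by rintro rfl; exact lt_irrefl _ hlt
        apply hM
        refine ⟨j, a', by rw [hjc]; exact hne, ?_, ?_⟩
        · simp only [GirlPrefers, Function.update_of_ne hj, hjc]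
          exact hlt
        · simp only [BoyPrefers]
          refine lt_of_le_of_ne ?_ ?_
          · rw [Fin.le_def, ha']; exact ih a'
          · intro h'
            apply hne
            have : j = M.symm a' := (B a').injective h'
            rw [← hjc, this]; simp
      · rw [Function.update_of_ne hca]; exact ih c
    · exact Or.inr ih
  | zero1 b h hb ih =>
    have hm := h.mem.1
    simp only [List.append_nil] at ih hm ⊢
    exact key _ b _ hb hm ih
  | zero2 N h hN ih =>
    rw [← List.append_assoc]
    exact key _ (N z) _ (hN z) h.mem.1 ih

lemma Reach.lower {z : Fin n} {B G : Fin n → Equiv.Perm (Fin n)} {p : Fin n → ℕ}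
    {t1 t2 : List (Fin n)} (h : Reach z B G p t1 t2) (s : Equiv.Perm (Fin n)) :
    ∀ l b r, t2 = l ++ b :: r → (∀ a ∈ t1 ++ l, s b < s a) →
      ∃ M : Fin n ≃ Fin n, IsStableMatching (Function.update G z s, B) M ∧ M z = b := by
  induction h with
  | start => intro l b r h; simp at h
  | conf a a' j h hj ha ha' hlt ih => exact ih
  | zero1 b h hb ih => intro l b r h; simp at h
  | @zero2 p t1 t2 M h hM ih =>
    intro l b r hl hrec
    rcases List.eq_nil_or_concat r with rfl | ⟨r', x, rfl⟩
    · have h1 := List.append_inj' hl (by simp)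
      obtain ⟨rfl, h2⟩ := h1
      simp at h2
      subst h2
      refine ⟨M, ?_, rfl⟩
      rintro ⟨g, a, hne, hg, hb⟩
      have hpa : p a = B a (M.symm a) := by
        have := hM (M.symm a)
        simp at this
        exact this.symm
      simp only [BoyPrefers] at hb
      have hlt : (B a g : ℕ) < p a := by rw [hpa]; exact hb
      by_cases hgz : g = z
      · subst hgz
        simp only [GirlPrefers, Function.update_self] at hg
        have := hrec a ((h.mem.1 a).2 hlt)
        exact lt_asymm hg this
      · simp only [GirlPrefers, Function.update_of_ne hgz] at hg
        obtain ⟨a', h1, h2⟩ := h.inv a g hgz hlt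
        have h3 := hM (M.symm a')
        simp at h3
        have : g = M.symm a' := pos_inj B (h1.trans h3.symm)
        rw [this] at hg
        simp at hg
        rw [← this] at hg
        exact lt_asymm hg h2
    · have h1 : t2 ++ [M z] = (l ++ b :: r') ++ [x] := by simpa using hl
      have h2 := List.append_inj' h1 (by simp)
      exact ih l b r' h2.1 hrec

/-- every girl other than `z` is occupied -/
def Occ (z : Fin n) (B : Fin n → Equiv.Perm (Fin n)) (p : Fin n → ℕ) : Prop :=
  ∀ j, j ≠ z → ∃ a, (B a j : ℕ) = p a

lemma pot_lt (p : Fin n → ℕ) (a : Fin n) (ha : p a < n) :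
    ∑ c, (n - Function.update p a (p a + 1) c) < ∑ c, (n - p c) := by
  refine Finset.sum_lt_sum ?_ ⟨a, Finset.mem_univ _, ?_⟩
  · intro c _
    by_cases h : c = a
    · subst h; simp; omega
    · simp [h]
  · simp; omega

lemma phase1 (z : Fin n) (B G : Fin n → Equiv.Perm (Fin n)) :
    ∀ (k : ℕ) (p : Fin n → ℕ) (t1 : List (Fin n)), Reach z B G p t1 [] →
      ∑ c, (n - p c) ≤ k → ¬ Occ z B p →
      ∃ p' t1', Reach z B G p' t1' [] ∧ Occ z B p' ∧ ∃ g, g ≠ z ∧ ∀ a, p' a ≤ (B a g : ℕ) := by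
  intro k
  induction k with
  | zero =>
    intro p t1 h hk hocc
    exfalso
    apply hocc
    intro j hj
    have h0 : ∀ c, n - p c = 0 := by
      intro c
      have := Finset.sum_eq_zero_iff.mp (Nat.le_zero.mp hk) c (Finset.mem_univ _)
      exact this
    obtain ⟨a', h1, _⟩ := h.inv j j hj (by have := h0 j; have := (B j j).isLt; omega)
    exact ⟨a', h1⟩
  | succ k ih =>
    intro p t1 h hk hocc
    have hocc' := hocc
    unfold Occ at hocc'
    push Not at hocc'
    obtain ⟨g, hg, hno⟩ := hocc'
    have hge : ∀ a, p a ≤ (B a g : ℕ) := by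
      intro a
      by_contra hcon
      obtain ⟨a', h1, _⟩ := h.inv a g hg (by omega)
      exact hno a' h1
    have hlt : ∀ a, p a < n := fun a => lt_of_le_of_lt (hge a) (B a g).isLt
    -- a uniform way to finish
    have fin : ∀ (a : Fin n) (t1' : List (Fin n)),
        Reach z B G (Function.update p a (p a + 1)) t1' [] →
        ∃ p' t1', Reach z B G p' t1' [] ∧ Occ z B p' ∧ ∃ g, g ≠ z ∧ ∀ a, p' a ≤ (B a g : ℕ) := by
      intro a t1' hr
      by_cases ho : Occ z B (Function.update p a (p a + 1))
      · refine ⟨_, _, hr, ho, g, hg, ?_⟩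
        intro c
        by_cases hc : c = a
        · subst hc
          rw [Function.update_self]
          exact lt_of_le_of_ne (hge c) (fun h => hno c h.symm)
        · rw [Function.update_of_ne hc]; exact hge c
      · refine ih _ _ hr ?_ ho
        have := pot_lt p a (hlt a)
        omega
    let cur : Fin n → Fin n := fun a => (B a).symm ⟨p a, hlt a⟩
    have hcur : ∀ a, (B a (cur a) : ℕ) = p a := by intro a; simp [cur]
    have hnsurj : ¬ Function.Surjective cur := by
      intro hs
      obtain ⟨a, ha⟩ := hs g
      exact hno a (by rw [← ha]; exact hcur a)
    have hninj : ¬ Function.Injective cur := fun hi => hnsurj (Finite.surjective_of_injective hi)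
    unfold Function.Injective at hninj
    push Not at hninj
    obtain ⟨a, a', he, hne⟩ := hninj
    by_cases hz : cur a = z
    · exact fin a _ (Reach.zero1 a h (by rw [← hz]; exact hcur a))
    · rcases lt_or_gt_of_ne (fun h => hne ((G (cur a)).injective h)) with hl | hl
      · exact fin a' _ (Reach.conf a' a (cur a) h hz (by rw [he]; exact hcur a') (hcur a) hl)
      · exact fin a _ (Reach.conf a a' (cur a) h hz (hcur a) (by rw [he]; exact hcur a') hl)

lemma phase2 (z : Fin n) (B G : Fin n → Equiv.Perm (Fin n)) (t1 : List (Fin n)) :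
    ∀ (k : ℕ) (p : Fin n → ℕ) (t2 : List (Fin n)), Reach z B G p t1 t2 →
      ∑ c, (n - p c) ≤ k → Occ z B p →
      ∃ p' t2', Reach z B G p' t1 t2' ∧ Occ z B p' ∧ ∃ a, n ≤ p' a := by
  intro k
  induction k with
  | zero =>
    intro p t2 h hk hocc
    refine ⟨p, t2, h, hocc, z, ?_⟩
    have := Finset.sum_eq_zero_iff.mp (Nat.le_zero.mp hk) z (Finset.mem_univ _)
    omega
  | succ k ih =>
    intro p t2 h hk hocc
    by_cases hex : ∃ a, n ≤ p a
    · exact ⟨p, t2, h, hocc, hex⟩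
    push Not at hex
    let cur : Fin n → Fin n := fun a => (B a).symm ⟨p a, hex a⟩
    have hcur : ∀ a, (B a (cur a) : ℕ) = p a := by intro a; simp [cur]
    by_cases hinj : Function.Injective cur
    · have hbij : Function.Bijective cur := Finite.injective_iff_bijective.mp hinj
      let M := (Equiv.ofBijective cur hbij).symm
      have hM : ∀ g, (B (M g) g : ℕ) = p (M g) := by
        intro g
        have h1 : cur (M g) = g := (Equiv.ofBijective cur hbij).apply_symm_apply g
        conv_lhs => rw [← h1]
        rw [h1]
        have := hcur (M g)
        rwa [h1] at this
      refine ih _ _ (Reach.zero2 M h hM) ?_ ?_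
      · have := pot_lt p (M z) (hex _); omega
      · intro j hj
        refine ⟨M j, ?_⟩
        rw [Function.update_of_ne (by intro h; exact hj (M.injective h))]
        exact hM j
    · have hinj' := hinj
      unfold Function.Injective at hinj'
      push Not at hinj'
      obtain ⟨a, a', he, hne⟩ := hinj'
      have hz : cur a ≠ z := by
        intro hz
        apply hinj
        apply Finite.injective_iff_surjective.mpr
        intro j
        by_cases hj : j = z
        · exact ⟨a, by rw [hz, hj]⟩
        · obtain ⟨c, hc⟩ := hocc j hj
          exact ⟨c, pos_inj B ((hcur c).trans hc.symm)⟩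
      have fin : ∀ c c' : Fin n, (B c (cur a) : ℕ) = p c → (B c' (cur a) : ℕ) = p c' →
          G (cur a) c' < G (cur a) c →
          ∃ p' t2', Reach z B G p' t1 t2' ∧ Occ z B p' ∧ ∃ a, n ≤ p' a := by
        intro c c' hc hc' hl
        refine ih _ _ (Reach.conf c c' (cur a) h hz hc hc' hl) ?_ ?_
        · have := pot_lt p c (hex _); omega
        · intro j hj
          obtain ⟨x, hx⟩ := hocc j hj
          by_cases hxc : x = c
          · subst hxc
            refine ⟨c', ?_⟩
            rw [Function.update_of_ne (by rintro rfl; exact lt_irrefl _ hl)]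
            rw [pos_inj B (hx.trans hc.symm)]
            exact hc'
          · exact ⟨x, by rw [Function.update_of_ne hxc]; exact hx⟩
      rcases lt_or_gt_of_ne (fun h => hne ((G (cur a)).injective h)) with hl | hl
      · exact fin a' a (by rw [he]; exact hcur a') (hcur a) hl
      · exact fin a a' (hcur a) (by rw [he]; exact hcur a') hl

/-- the static event at the end of phase 1 -/
def EvI (z : Fin n) (B G : Fin n → Equiv.Perm (Fin n)) (M : Fin n ≃ Fin n) (g : Fin n) (k : ℕ) :
    Prop :=
  g ≠ z ∧ (∀ i, i ≠ z → ¬ B (M i) g < B (M i) i) ∧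
  (∀ i j, i ≠ z → j ≠ z → i ≠ j → B (M i) j < B (M i) i → G j (M j) < G j (M i)) ∧
  k ≤ 1 + (univ.filter fun i => i ≠ z ∧ B (M i) z < B (M i) i).card

/-- the static event at the end of phase 2 -/
def EvF (z : Fin n) (B G : Fin n → Equiv.Perm (Fin n)) (M : Fin n ≃ Fin n) (k : ℕ) : Prop :=
  (∀ j, j ≠ z → G j (M j) < G j (M z)) ∧
  (∀ i j, i ≠ z → j ≠ z → i ≠ j → B (M i) j < B (M i) i → G j (M j) < G j (M i)) ∧
  (univ.filter fun i => i ≠ z ∧ B (M i) z < B (M i) i).card ≤ k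

lemma evI_of {z : Fin n} {B G : Fin n → Equiv.Perm (Fin n)} {p : Fin n → ℕ} {t1 : List (Fin n)}
    (h : Reach z B G p t1 []) (ho : Occ z B p) {g : Fin n} (hg : g ≠ z)
    (hpg : ∀ a, p a ≤ (B a g : ℕ)) : ∃ M, EvI z B G M g t1.length := by
  have hbest : ∀ j, j ≠ z → ∃ a, (B a j : ℕ) = p a ∧ ∀ a', (B a' j : ℕ) = p a' → G j a ≤ G j a' := by
    intro j hj
    obtain ⟨a, ha⟩ := ho j hj
    obtain ⟨x, hx, hmin⟩ := Finset.exists_min_image (univ.filter fun a => (B a j : ℕ) = p a) (G j)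
      ⟨a, by simpa using ha⟩
    simp at hx hmin
    exact ⟨x, hx, hmin⟩
  choose! f hf1 hf2 using hbest
  have hex : ∃ b, b ∉ (univ.erase z).image f := by
    by_contra hcon
    push Not at hcon
    have h1 : (univ : Finset (Fin n)) ⊆ (univ.erase z).image f := fun x _ => hcon x
    have h2 := Finset.card_le_card h1
    have h3 := Finset.card_image_le (s := univ.erase z) (f := f)
    rw [Finset.card_erase_of_mem (Finset.mem_univ _)] at h3
    simp at h2 h3
    have := z.isLt
    omega
  obtain ⟨b, hb⟩ := hex
  have hb' : ∀ j, j ≠ z → f j ≠ b := by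
    intro j hj h
    apply hb
    rw [Finset.mem_image]
    exact ⟨j, by simp [hj], h⟩
  let F := Function.update f z b
  have hF : ∀ j, j ≠ z → F j = f j := fun j hj => Function.update_of_ne hj _ _
  have hFz : F z = b := Function.update_self _ _ _
  have hinj : Function.Injective F := by
    intro i j hij
    by_cases hi : i = z <;> by_cases hj : j = z
    · rw [hi, hj]
    · rw [hi, hFz, hF j hj] at hij
      exact absurd hij.symm (hb' j hj)
    · rw [hj, hFz, hF i hi] at hij
      exact absurd hij (hb' i hi)
    · rw [hF i hi, hF j hj] at hij
      have h1 := hf1 i hi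
      have h2 := hf1 j hj
      rw [← hij] at h2
      exact pos_inj B (h1.trans h2.symm)
  let M := Equiv.ofBijective F (Finite.injective_iff_bijective.mp hinj)
  have hM : ∀ j, j ≠ z → M j = f j := hF
  have hMp : ∀ j, j ≠ z → (B (M j) j : ℕ) = p (M j) := fun j hj => by rw [hM j hj]; exact hf1 j hj
  refine ⟨M, hg, ?_, ?_, ?_⟩
  · intro i hi hlt
    have h1 := hMp i hi
    have h2 := hpg (M i)
    rw [Fin.lt_def] at hlt
    omega
  · intro i j hi hj hij hlt
    obtain ⟨a', h1, h2⟩ := h.inv (M i) j hj (by rw [← hMp i hi]; exact hlt)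
    rw [hM j hj]
    exact lt_of_le_of_lt (hf2 j hj a' h1) h2
  · have hnd := h.mem.2
    have hm := h.mem.1
    simp only [List.append_nil] at hnd hm
    rw [← List.toFinset_card_of_nodup hnd]
    have hsub : t1.toFinset ⊆
        insert (M z) ((univ.filter fun i => i ≠ z ∧ B (M i) z < B (M i) i).image M) := by
      intro a ha
      rw [List.mem_toFinset, hm] at ha
      by_cases hz : M.symm a = z
      · simp [← hz]
      · rw [Finset.mem_insert]; right
        rw [Finset.mem_image]
        refine ⟨M.symm a, ?_, by simp⟩
        simp only [Finset.mem_filter, Finset.mem_univ, true_and, Equiv.apply_symm_apply]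
        refine ⟨hz, ?_⟩
        have := hMp _ hz
        simp only [Equiv.apply_symm_apply] at this
        rw [Fin.lt_def, this]; exact ha
    refine (Finset.card_le_card hsub).trans ((Finset.card_insert_le _ _).trans ?_)
    have := Finset.card_image_le (s := univ.filter fun i => i ≠ z ∧ B (M i) z < B (M i) i) (f := M)
    omega

lemma evF_of {z : Fin n} {B G : Fin n → Equiv.Perm (Fin n)} {p : Fin n → ℕ} {t1 t2 : List (Fin n)}
    (h : Reach z B G p t1 t2) (ho : Occ z B p) {b : Fin n}
    (hb : n ≤ p b) : ∃ M, EvF z B G M (t1 ++ t2).length := by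
  unfold Occ at ho
  choose! f hf1 using ho
  have hb' : ∀ j, j ≠ z → f j ≠ b := by
    intro j hj h
    have h1 := hf1 j hj
    rw [h] at h1
    have := (B b j).isLt
    omega
  let F := Function.update f z b
  have hF : ∀ j, j ≠ z → F j = f j := fun j hj => Function.update_of_ne hj _ _
  have hFz : F z = b := Function.update_self _ _ _
  have hinj : Function.Injective F := by
    intro i j hij
    by_cases hi : i = z <;> by_cases hj : j = z
    · rw [hi, hj]
    · rw [hi, hFz, hF j hj] at hij
      exact absurd hij.symm (hb' j hj)
    · rw [hj, hFz, hF i hi] at hij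
      exact absurd hij (hb' i hi)
    · rw [hF i hi, hF j hj] at hij
      have h1 := hf1 i hi
      have h2 := hf1 j hj
      rw [← hij] at h2
      exact pos_inj B (h1.trans h2.symm)
  let M := Equiv.ofBijective F (Finite.injective_iff_bijective.mp hinj)
  have hM : ∀ j, j ≠ z → M j = f j := hF
  have hMz : M z = b := hFz
  have hMp : ∀ j, j ≠ z → (B (M j) j : ℕ) = p (M j) := fun j hj => by rw [hM j hj]; exact hf1 j hj
  have huniq : ∀ j, j ≠ z → ∀ a, (B a j : ℕ) = p a → a = M j := by
    intro j hj a ha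
    have hz : M.symm a ≠ z := by
      intro hz
      have : a = b := by rw [← hMz, ← hz]; simp
      subst this
      have := (B a j).isLt
      omega
    have h1 := hMp _ hz
    simp only [Equiv.apply_symm_apply] at h1
    have := pos_inj B (ha.trans h1.symm)
    rw [this]; simp
  refine ⟨M, ?_, ?_, ?_⟩
  · intro j hj
    obtain ⟨a', h1, h2⟩ := h.inv (M z) j hj (by rw [hMz]; exact lt_of_lt_of_le (B b j).isLt hb)
    rw [← huniq j hj a' h1]
    exact h2
  · intro i j hi hj hij hlt
    obtain ⟨a', h1, h2⟩ := h.inv (M i) j hj (by rw [← hMp i hi]; exact hlt)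
    rw [← huniq j hj a' h1]
    exact h2
  · have hm := h.mem.1
    rw [← List.toFinset_card_of_nodup h.mem.2]
    rw [← Finset.card_image_of_injective _ M.injective]
    apply Finset.card_le_card
    intro a ha
    rw [Finset.mem_image] at ha
    obtain ⟨i, hi, rfl⟩ := ha
    simp only [Finset.mem_filter, Finset.mem_univ, true_and] at hi
    rw [List.mem_toFinset, hm, ← hMp i hi.1]
    exact hi.2

theorem process (hn : 2 ≤ n) (z : Fin n) (B G : Fin n → Equiv.Perm (Fin n)) :
    ∃ t1 t2 : List (Fin n), (t1 ++ t2).Nodup ∧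
      (∀ (s : Equiv.Perm (Fin n)) (M : Fin n ≃ Fin n),
        IsStableMatching (Function.update G z s, B) M →
          ∃ l r, t1 ++ t2 = l ++ M z :: r ∧ ∀ a ∈ l, s (M z) < s a) ∧
      (∀ (s : Equiv.Perm (Fin n)) l b r, t2 = l ++ b :: r → (∀ a ∈ t1 ++ l, s b < s a) →
        ∃ M : Fin n ≃ Fin n, IsStableMatching (Function.update G z s, B) M ∧ M z = b) ∧
      (∃ M g, EvI z B G M g t1.length) ∧ (∃ M, EvF z B G M (t1 ++ t2).length) := by
  have h1 : ∃ p t1, Reach z B G p t1 [] ∧ Occ z B p ∧ ∃ g, g ≠ z ∧ ∀ a, p a ≤ (B a g : ℕ) := by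
    by_cases ho : Occ z B (fun _ => 0)
    · haveI : Nontrivial (Fin n) := Fin.nontrivial_iff_two_le.mpr hn
      obtain ⟨g, hg⟩ := exists_ne z
      exact ⟨_, _, Reach.start, ho, g, hg, fun a => Nat.zero_le _⟩
    · exact phase1 z B G _ _ _ Reach.start le_rfl ho
  obtain ⟨p, t1, hr, ho, g, hg, hpg⟩ := h1
  obtain ⟨p', t2, hr', ho', b, hb⟩ := phase2 z B G t1 _ p [] hr le_rfl ho
  refine ⟨t1, t2, hr'.mem.2, ?_, ?_, ?_, ?_⟩
  · intro s M hM
    rcases hr'.upper s M hM with h | h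
    · have := h b
      have := (B b (M.symm b)).isLt
      omega
    · exact h
  · intro s
    exact hr'.lower s
  · obtain ⟨M, hM⟩ := evI_of hr ho hg hpg
    exact ⟨M, g, hM⟩
  · exact evF_of hr' ho' hb

end process

end HelperC

section HelperD
open Finset BigOperators
open MeasureTheory unitInterval

theorem int_I (f : ℝ → ℝ) : ∫ x : I, f x = ∫ x in (0:ℝ)..1, f x := by
  rw [unitInterval.volume_def, integral_subtype_comap measurableSet_Icc,
    intervalIntegral.integral_of_le zero_le_one, integral_Icc_eq_integral_Ioc]

theorem int_pow_I (k : ℕ) : ∫ y : I, (y:ℝ)^k = 1/((k:ℝ)+1) := by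
  rw [int_I (fun y => y^k)]; simp

theorem cont_int {X : Type*} [TopologicalSpace X] [CompactSpace X] [MeasurableSpace X] [OpensMeasurableSpace X]
    (μ : Measure X) [IsFiniteMeasure μ] {f : X → ℝ} (hf : Continuous f) : Integrable f μ :=
  hf.integrable_of_hasCompactSupport (HasCompactSupport.of_compactSpace f)

theorem int_exp_I (c : ℝ) (hc : 0 ≤ c) : ∫ t : I, Real.exp (-(1-(t:ℝ))*c) ≤ 1 / max 1 c := by
  rcases le_total c 1 with h | h
  · rw [max_eq_left h]
    calc ∫ t : I, Real.exp (-(1-(t:ℝ))*c) ≤ ∫ t : I, (1:ℝ) := by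
          refine integral_mono (cont_int _ (by fun_prop)) (by simp) ?_
          intro t
          have := t.2.2
          simp only [Real.exp_le_one_iff]
          nlinarith
      _ = 1/1 := by simp
  · rw [max_eq_right h, int_I (fun t => Real.exp (-(1-t)*c))]
    have hc : 0 < c := by linarith
    have : ∀ t ∈ Set.uIcc (0:ℝ) 1, HasDerivAt (fun t => Real.exp (-(1-t)*c)/c) (Real.exp (-(1-t)*c)) t := by
      intro t _
      have h1 : HasDerivAt (fun t:ℝ => -(1-t)*c) c t := by
        have := (((hasDerivAt_id t).const_sub 1).neg).mul_const c
        simpa using this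
      have := h1.exp.div_const c
      rwa [mul_div_cancel_right₀ _ hc.ne'] at this
    rw [intervalIntegral.integral_eq_sub_of_hasDerivAt this (by
      apply Continuous.intervalIntegrable; fun_prop)]
    have := Real.exp_pos (-(1-0)*c)
    simp only [sub_self, neg_zero, zero_mul, Real.exp_zero]
    have h3 : 0 < Real.exp (-(1-0)*c)/c := by positivity
    linarith

theorem int_inv_I (A : ℝ) (hA : 0 < A) (k : ℕ) (hk : 1 ≤ k) :
    ∫ x : I, (1/(A+(x:ℝ))^(k+1)) ≤ 1/(A^k*k) := by
  rw [int_I (fun x => 1/(A+x)^(k+1))]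
  have hk0 : (0:ℝ) < k := by exact_mod_cast hk
  have : ∀ t ∈ Set.uIcc (0:ℝ) 1, HasDerivAt (fun t => -(1/((A+t)^k*k))) (1/(A+t)^(k+1)) t := by
    intro t ht
    rw [Set.uIcc_of_le zero_le_one] at ht
    have hp : 0 < A + t := by linarith [ht.1]
    have h1 : HasDerivAt (fun t:ℝ => A + t) 1 t := by simpa using (hasDerivAt_id t).const_add A
    have hne : ((fun t:ℝ => A + t) ^ k) t * (k:ℝ) ≠ 0 := by
      simp only [Pi.pow_apply]; positivity
    have h2 := (((h1.pow k).mul_const (k:ℝ)).inv hne).neg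
    simp only [one_div]
    have he : ((A + t) ^ (k + 1))⁻¹ = -(-(↑k * (A + t) ^ (k - 1) * 1 * ↑k) / (((fun t => A + t) ^ k) t * ↑k) ^ 2) := by
      obtain ⟨j, rfl⟩ : ∃ j, k = j+1 := ⟨k-1, by omega⟩
      simp only [Nat.add_sub_cancel, Pi.pow_apply]
      field_simp
      ring
    rw [he]
    exact h2
  rw [intervalIntegral.integral_eq_sub_of_hasDerivAt this (by
    apply ContinuousOn.intervalIntegrable
    apply ContinuousOn.div (by fun_prop) (by fun_prop)
    intro t ht
    rw [Set.uIcc_of_le zero_le_one] at ht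
    have hp : 0 < A + t := by linarith [ht.1]
    positivity)]
  have h3 : 0 < 1/((A+1)^k*k) := by positivity
  simp only [add_zero]
  linarith

theorem simplex (k : ℕ) (A : ℝ) (hA : 0 < A) :
    ∫ x : Fin k → I, (1/(A + ∑ i, (x i:ℝ))^(k+1)) ≤ 1/(A * k.factorial) := by
  induction k generalizing A with
  | zero => simp
  | succ k ih =>
    have hs : ∀ (k:ℕ) (x : Fin k → I), 0 ≤ ∑ i, (x i:ℝ) := fun k x => Finset.sum_nonneg fun i _ => (x i).2.1
    have hmp := (volume_preserving_piFinSuccAbove (fun _ : Fin (k+1) => I) 0)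
    have h1 : ∫ x : Fin (k+1) → I, (1/(A + ∑ i, (x i:ℝ))^(k+1+1)) =
        ∫ p : I × (Fin k → I), (1/(A + ((p.1:ℝ) + ∑ i, (p.2 i:ℝ)))^(k+1+1)) := by
      rw [← hmp.integral_comp (MeasurableEquiv.measurableEmbedding _)]
      congr 1
      ext x
      simp only [Fin.sum_univ_succ]
      rfl
    have hc : Continuous (fun p : I × (Fin k → I) => (1/(A + ((p.1:ℝ) + ∑ i, (p.2 i:ℝ)))^(k+1+1))) := by
      apply Continuous.div (by fun_prop) (by fun_prop)
      intro p
      have := hs k p.2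
      have := p.1.2.1
      positivity
    have hvol : (volume : Measure (I × (Fin k → I))) = (volume : Measure I).prod volume := rfl
    rw [h1, hvol, integral_prod_symm _ (cont_int _ hc)]
    have hk : (0:ℝ) < ((k+1:ℕ):ℝ) := by positivity
    calc ∫ y : Fin k → I, ∫ x : I, (1/(A + ((x:ℝ) + ∑ i, (y i:ℝ)))^(k+1+1))
        ≤ ∫ y : Fin k → I, (1/((k+1:ℕ):ℝ)) * (1/(A + ∑ i, (y i:ℝ))^(k+1)) := by
          refine integral_mono ?_ ?_ ?_
          · exact (cont_int _ hc).integral_prod_right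
          · apply cont_int
            apply Continuous.mul (by fun_prop)
            apply Continuous.div (by fun_prop) (by fun_prop)
            intro p
            have := hs k p
            positivity
          · intro y
            have h0 := hs k y
            have := int_inv_I (A + ∑ i, (y i:ℝ)) (by linarith) (k+1) (by omega)
            simp only
            refine le_trans (le_of_eq ?_) (this.trans (le_of_eq ?_))
            · congr 1; ext x; congr 2; ring
            · field_simp
      _ ≤ 1/(A * (k+1).factorial) := by
          rw [integral_const_mul]
          calc _ ≤ (1/((k+1:ℕ):ℝ)) * (1/(A * k.factorial)) := by
                gcongr; exact ih A hA
            _ = _ := by rw [Nat.factorial_succ]; push_cast; field_simp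

theorem simplex' {ι : Type*} [Fintype ι] (A : ℝ) (hA : 0 < A) :
    ∫ x : ι → I, (1/(A + ∑ i, (x i:ℝ))^(Fintype.card ι)) ≤ (A + Fintype.card ι)/(A * (Fintype.card ι).factorial) := by
  set k := Fintype.card ι with hk
  let e : Fin k ≃ ι := (Fintype.equivFin ι).symm
  have hmp := (volume_measurePreserving_piCongrLeft (fun _ : ι => I) e)
  have hs : ∀ (x : Fin k → I), 0 ≤ ∑ i, (x i:ℝ) := fun x => Finset.sum_nonneg fun i _ => (x i).2.1
  have h1 : ∫ x : ι → I, (1/(A + ∑ i, (x i:ℝ))^k) = ∫ x : Fin k → I, (1/(A + ∑ i, (x i:ℝ))^k) := by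
    rw [← hmp.integral_comp (MeasurableEquiv.measurableEmbedding _)]
    congr 1
    ext x
    congr 3
    rw [← e.sum_comp]
    simp [MeasurableEquiv.piCongrLeft, Equiv.piCongrLeft]
  rw [h1]
  have hc : ∀ j : ℕ, Continuous fun x : Fin k → I => 1/(A + ∑ i, (x i:ℝ))^j := by
    intro j
    apply Continuous.div (by fun_prop) (by fun_prop)
    intro p
    have := hs p
    positivity
  calc _ ≤ ∫ x : Fin k → I, (A+k) * (1/(A + ∑ i, (x i:ℝ))^(k+1)) := by
        refine integral_mono (cont_int _ (hc _)) (cont_int _ ((hc _).const_smul (A+(k:ℝ)))) ?_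
        intro x
        have h0 := hs x
        have h2 : ∑ i, (x i:ℝ) ≤ k := by
          calc _ ≤ ∑ i : Fin k, (1:ℝ) := Finset.sum_le_sum fun i _ => (x i).2.2
            _ = k := by simp
        have hp : 0 < A + ∑ i, (x i:ℝ) := by linarith
        simp only
        rw [pow_succ, ← one_div_mul_one_div, mul_left_comm]
        refine le_mul_of_one_le_right (by positivity) ?_
        rw [mul_one_div, one_le_div hp]; linarith
    _ ≤ _ := by
        rw [integral_const_mul]
        calc _ ≤ (A+k) * (1/(A * k.factorial)) := by
              gcongr; exact simplex k A hA
          _ = _ := by ring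

end HelperD

section HelperE
open Finset BigOperators
open MeasureTheory unitInterval

theorem avg_pi_inj {ι κ α : Type*} [Fintype ι] [DecidableEq κ] [Fintype κ] [Fintype α] [Nonempty α]
    (e : ι → κ) (he : Function.Injective e) (f : ι → α → ℝ) :
    avg (fun x : κ → α => ∏ i, f i (x (e i))) = ∏ i, avg (f i) := by
  classical
  have h1 : ∀ x : κ → α, ∏ i, f i (x (e i)) = ∏ j, (∏ i with e i = j, f i (x j)) := by
    intro x
    rw [← Finset.prod_fiberwise (s := univ) (g := e) (f := fun i => f i (x (e i)))]
    refine Finset.prod_congr rfl fun j _ => Finset.prod_congr rfl fun i hi => ?_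
    simp only [Finset.mem_filter] at hi
    rw [hi.2]
  simp only [h1]
  rw [avg_pi (fun j a => ∏ i with e i = j, f i a)]
  rw [← Finset.prod_fiberwise (s := univ) (g := e) (f := fun i => avg (f i))]
  refine Finset.prod_congr rfl fun j _ => ?_
  by_cases h : ∃ i, e i = j
  · obtain ⟨i, rfl⟩ := h
    have : (univ.filter fun k => e k = e i) = {i} := by
      ext k; simp [he.eq_iff]
    simp [this]
  · have : (univ.filter fun k => e k = j) = ∅ := by
      ext k; simp only [Finset.mem_filter, mem_univ, true_and, Finset.notMem_empty, iff_false]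
      exact fun hk => h ⟨k, hk⟩
    simp [this, avg_const]

open Classical in
theorem avg_ii {n : ℕ} (j : Fin n) (D : Finset (Fin n)) (hj : j ∉ D) (V : Fin n → ℝ) :
    avg (fun τ : Equiv.Perm (Fin n) => ∏ g ∈ D, if τ g < τ j then V g else 1)
      = ∫ x : I, ∏ g ∈ D, (V g + (1 - V g) * (x:ℝ)) := by
  have h1 : ∀ τ : Equiv.Perm (Fin n), (∏ g ∈ D, if τ g < τ j then V g else (1:ℝ)) =
      ∑ t ∈ D.powerset, ((∏ g ∈ t, V g) * ∏ g ∈ D \ t, (1 - V g)) *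
        (if ∀ a ∈ D \ t, τ j < τ a then (1:ℝ) else 0) := by
    intro τ
    have : ∀ g ∈ D, (if τ g < τ j then V g else (1:ℝ)) = V g + (1 - V g) * (if τ j < τ g then 1 else 0) := by
      intro g hg
      have : τ g ≠ τ j := fun h => hj (τ.injective h ▸ hg)
      rcases lt_or_gt_of_ne this with h | h
      · simp [h, h.le, not_lt.2 h.le]
      · simp [h, not_lt.2 h.le]
    rw [Finset.prod_congr rfl this, Finset.prod_add]
    refine Finset.sum_congr rfl fun t ht => ?_
    rw [Finset.prod_mul_distrib, mul_assoc]
    congr 2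
    rw [Finset.prod_ite_zero]
    simp
  simp only [h1]
  rw [avg_sum]
  have h2 : ∀ x : I, ∏ g ∈ D, (V g + (1 - V g) * (x:ℝ)) =
      ∑ t ∈ D.powerset, ((∏ g ∈ t, V g) * ∏ g ∈ D \ t, (1 - V g)) * (x:ℝ)^((D \ t).card) := by
    intro x
    rw [Finset.prod_add]
    refine Finset.sum_congr rfl fun t ht => ?_
    rw [Finset.prod_mul_distrib, mul_assoc, Finset.prod_const]
  simp only [h2]
  rw [integral_finsetSum _ (fun t _ => cont_int _ (by fun_prop))]
  refine Finset.sum_congr rfl fun t ht => ?_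
  rw [integral_const_mul, int_pow_I, avg_const_mul, avg_min]
  intro h
  exact hj (Finset.mem_sdiff.1 h).1

open Classical in
theorem avg_ii_le {n : ℕ} (j : Fin n) (D : Finset (Fin n)) (hj : j ∉ D) (V : Fin n → ℝ) (hV : ∀ g ∈ D, 0 ≤ V g) :
    avg (fun τ : Equiv.Perm (Fin n) => ∏ g ∈ D, if τ g < τ j then V g else 1)
      ≤ ∫ x : I, Real.exp (-(x:ℝ) * ∑ g ∈ D, (1 - V g)) := by
  rw [avg_ii j D hj V]
  have h := unitInterval.measurePreserving_symm.integral_comp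
    (unitInterval.symmMeasurableEquiv.measurableEmbedding) (fun x : I => ∏ g ∈ D, (V g + (1 - V g) * (x:ℝ)))
  rw [← h]
  refine integral_mono (cont_int _ ?_) (cont_int _ (by fun_prop)) ?_
  · simp only [unitInterval.coe_symm_eq]; fun_prop
  · intro x
    simp only [unitInterval.coe_symm_eq]
    rw [Finset.mul_sum, Real.exp_sum]
    refine Finset.prod_le_prod ?_ ?_
    · intro g hg
      have := hV g hg
      nlinarith [x.2.1, x.2.2, mul_nonneg this x.2.1]
    · intro g hg
      have := Real.add_one_le_exp (-(x:ℝ) * (1 - V g))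
      linarith

end HelperE

section HelperF
open Finset BigOperators
open MeasureTheory unitInterval

theorem avg_integral {α X : Type*} [Fintype α] [MeasurableSpace X] (μ : Measure X)
    (f : α → X → ℝ) (hf : ∀ a, Integrable (f a) μ) :
    avg (fun a => ∫ x, f a x ∂μ) = ∫ x, avg (fun a => f a x) ∂μ := by
  unfold avg
  rw [integral_div, integral_finsetSum _ (fun a _ => hf a)]

open Classical in
theorem FM1 {n : ℕ} {ι : Type*} [Fintype ι] (γ β : ι → Fin n)
    (hγ : Function.Injective γ) (hβ : Function.Injective β)
    (S : Finset (Fin n)) (hS : ∀ i, γ i ∉ S) (W : Fin n → ℝ) (hW : ∀ g ∈ S, 0 ≤ W g)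
    (D0 : Finset (Fin n)) (t : ι → I) :
    avg (fun B : Fin n → Equiv.Perm (Fin n) =>
      (∏ i, ∏ g ∈ S, if B (β i) g < B (β i) (γ i) then W g else 1) *
      ∏ i, (t i : ℝ) ^ (D0.card + (univ.filter (fun k => k ≠ i ∧ B (β k) (γ i) < B (β k) (γ k))).card)) ≤
    ∫ x : ι → I, Real.exp (-(∑ g ∈ S, (1 - W g)) * ∑ i, (x i:ℝ)) *
      ∏ i, Real.exp (-(1-(t i:ℝ)) * (D0.card + ∑ k, (x k : ℝ) - x i)) := by
  set V : Fin n → ℝ := Function.extend γ (fun i => (t i:ℝ)) W with hV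
  have hV1 : ∀ i, V (γ i) = t i := fun i => hγ.extend_apply _ _ _
  have hV2 : ∀ g ∈ S, V g = W g := fun g hg =>
    Function.extend_apply' _ _ _ (fun ⟨i, hi⟩ => hS i (hi ▸ hg))
  set D : ι → Finset (Fin n) := fun k => S ∪ (univ.erase k).image γ with hD
  have hdisj : ∀ k, Disjoint S ((univ.erase k).image γ) := by
    intro k
    rw [Finset.disjoint_left]
    intro g hg hg'
    obtain ⟨i, _, rfl⟩ := Finset.mem_image.1 hg'
    exact hS i hg
  have hkD : ∀ k, γ k ∉ D k := by
    intro k hk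
    rcases Finset.mem_union.1 hk with h | h
    · exact hS k h
    · obtain ⟨i, hi, h⟩ := Finset.mem_image.1 h
      exact (Finset.mem_erase.1 hi).1 (hγ h)
  have hVn : ∀ k, ∀ g ∈ D k, 0 ≤ V g := by
    intro k g hg
    rcases Finset.mem_union.1 hg with h | h
    · rw [hV2 g h]; exact hW g h
    · obtain ⟨i, hi, rfl⟩ := Finset.mem_image.1 h
      rw [hV1]; exact (t i).2.1
  have hsum : ∀ k, ∑ g ∈ D k, (1 - V g) = (∑ g ∈ S, (1 - W g)) + (∑ i, (1-(t i:ℝ)) - (1 - t k)) := by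
    intro k
    rw [hD, Finset.sum_union (hdisj k), Finset.sum_image (fun a _ b _ h => hγ h)]
    congr 1
    · exact Finset.sum_congr rfl fun g hg => by rw [hV2 g hg]
    · rw [← Finset.add_sum_erase univ (fun i => 1-(t i:ℝ)) (mem_univ k)]
      simp only [hV1]; ring
  have key : ∀ B : Fin n → Equiv.Perm (Fin n),
      (∏ i, ∏ g ∈ S, if B (β i) g < B (β i) (γ i) then W g else 1) *
      ∏ i, (t i : ℝ) ^ (D0.card + (univ.filter (fun k => k ≠ i ∧ B (β k) (γ i) < B (β k) (γ k))).card)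
      = (∏ i, (t i:ℝ)^D0.card) * ∏ k, (∏ g ∈ D k, if B (β k) g < B (β k) (γ k) then V g else 1) := by
    intro B
    have h1 : ∀ k, (∏ g ∈ D k, if B (β k) g < B (β k) (γ k) then V g else 1) =
        (∏ g ∈ S, if B (β k) g < B (β k) (γ k) then W g else 1) *
        ∏ i, if k ≠ i ∧ B (β k) (γ i) < B (β k) (γ k) then (t i:ℝ) else 1 := by
      intro k
      rw [hD, Finset.prod_union (hdisj k), Finset.prod_image (fun a _ b _ h => hγ h)]
      congr 1
      · exact Finset.prod_congr rfl fun g hg => by rw [hV2 g hg]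
      · rw [← Finset.mul_prod_erase univ _ (mem_univ k)]
        simp only [ne_eq, not_true_eq_false, false_and, if_false, one_mul, hV1]
        refine Finset.prod_congr rfl fun i hi => ?_
        have := (Finset.mem_erase.1 hi).1
        simp [Ne.symm this]
    simp only [h1, pow_add, Finset.prod_mul_distrib]
    have h2 : ∏ i, (t i : ℝ) ^ ((univ.filter (fun k => k ≠ i ∧ B (β k) (γ i) < B (β k) (γ k))).card) =
        ∏ k, ∏ i, if k ≠ i ∧ B (β k) (γ i) < B (β k) (γ k) then (t i:ℝ) else 1 := by
      rw [Finset.prod_comm]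
      refine Finset.prod_congr rfl fun i _ => ?_
      rw [← Finset.prod_filter, Finset.prod_const]
    rw [h2]; ring
  simp only [key]
  rw [avg_const_mul, avg_pi_inj β hβ (fun k (τ : Equiv.Perm (Fin n)) => ∏ g ∈ D k, if τ g < τ (γ k) then V g else 1)]
  calc _ ≤ (∏ i, Real.exp (-(1-(t i:ℝ)) * D0.card)) * ∏ k, ∫ x : I, Real.exp (-(x:ℝ) * ∑ g ∈ D k, (1 - V g)) := by
        refine mul_le_mul ?_ ?_ ?_ ?_
        · refine Finset.prod_le_prod (fun i _ => pow_nonneg (t i).2.1 _) fun i _ => ?_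
          have h1 : (t i:ℝ) ≤ Real.exp (-(1-(t i:ℝ))) := by
            have := Real.add_one_le_exp (-(1-(t i:ℝ))); linarith
          calc (t i:ℝ)^D0.card ≤ (Real.exp (-(1-(t i:ℝ))))^D0.card := pow_le_pow_left₀ (t i).2.1 h1 _
            _ = _ := by rw [← Real.exp_nat_mul]; ring_nf
        · refine Finset.prod_le_prod (fun i _ => ?_) fun k _ => avg_ii_le _ _ (hkD k) _ (hVn k)
          refine avg_nonneg fun τ => Finset.prod_nonneg fun g hg => ?_
          split_ifs
          · exact hVn _ _ hg
          · exact zero_le_one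
        · refine Finset.prod_nonneg fun i _ => ?_
          refine avg_nonneg fun τ => Finset.prod_nonneg fun g hg => ?_
          split_ifs
          · exact hVn _ _ hg
          · exact zero_le_one
        · exact Finset.prod_nonneg fun i _ => (Real.exp_pos _).le
    _ = _ := by
        rw [← integral_fintype_prod_volume_eq_prod (fun k (x:I) => Real.exp (-(x:ℝ) * ∑ g ∈ D k, (1 - V g))),
          ← integral_const_mul]
        congr 1
        ext x
        rw [← Real.exp_sum, ← Real.exp_sum, ← Real.exp_sum, ← Real.exp_add, ← Real.exp_add]
        congr 1
        simp only [hsum]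
        simp only [neg_mul, mul_add, mul_sub, add_mul, sub_mul, mul_one, one_mul,
          Finset.sum_add_distrib, Finset.sum_sub_distrib, Finset.sum_neg_distrib, ← Finset.sum_mul, ← Finset.mul_sum,
          neg_sub, neg_add, Finset.sum_const, nsmul_eq_mul]
        have : ∑ i, (x i:ℝ) * (t i:ℝ) = ∑ i, (t i:ℝ) * (x i:ℝ) := Finset.sum_congr rfl fun i _ => mul_comm _ _
        rw [this]
        ring

open Classical in
theorem FM2 {n : ℕ} {ι : Type*} [Fintype ι] (γ β : ι → Fin n)
    (hγ : Function.Injective γ) (hβ : Function.Injective β)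
    (S : Finset (Fin n)) (hS : ∀ i, γ i ∉ S) (W : Fin n → ℝ) (hW : ∀ g ∈ S, 0 ≤ W g)
    (D0 : Finset (Fin n)) (hD : ∀ i, β i ∉ D0) :
    avg (fun P : PrefProfile n =>
      (∏ i, ∏ g ∈ S, if P.2 (β i) g < P.2 (β i) (γ i) then W g else 1) *
      ∏ i, (if ∀ a ∈ D0 ∪ (univ.filter (fun k => k ≠ i ∧ P.2 (β k) (γ i) < P.2 (β k) (γ k))).image β,
        P.1 (γ i) (β i) < P.1 (γ i) a then (1:ℝ) else 0)) ≤
    ∫ x : ι → I, Real.exp (-(∑ g ∈ S, (1 - W g)) * ∑ i, (x i:ℝ)) *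
      ∏ i, (1 / max 1 (D0.card + ∑ k, (x k : ℝ) - x i)) := by
  rw [avg_prod_left]
  have hG : ∀ B : Fin n → Equiv.Perm (Fin n), avg (fun G : Fin n → Equiv.Perm (Fin n) =>
      (∏ i, ∏ g ∈ S, if B (β i) g < B (β i) (γ i) then W g else 1) *
      ∏ i, (if ∀ a ∈ D0 ∪ (univ.filter (fun k => k ≠ i ∧ B (β k) (γ i) < B (β k) (γ k))).image β,
        G (γ i) (β i) < G (γ i) a then (1:ℝ) else 0)) =
      ∫ t : ι → I, (∏ i, ∏ g ∈ S, if B (β i) g < B (β i) (γ i) then W g else 1) *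
      ∏ i, (t i : ℝ) ^ (D0.card + (univ.filter (fun k => k ≠ i ∧ B (β k) (γ i) < B (β k) (γ k))).card) := by
    intro B
    rw [avg_const_mul, integral_const_mul]
    congr 1
    rw [avg_pi_inj γ hγ (fun i (τ : Equiv.Perm (Fin n)) =>
      (if ∀ a ∈ D0 ∪ (univ.filter (fun k => k ≠ i ∧ B (β k) (γ i) < B (β k) (γ k))).image β,
        τ (β i) < τ a then (1:ℝ) else 0))]
    rw [integral_fintype_prod_volume_eq_prod (fun i (t:I) => (t:ℝ)^(D0.card + (univ.filter (fun k => k ≠ i ∧ B (β k) (γ i) < B (β k) (γ k))).card))]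
    refine Finset.prod_congr rfl fun i _ => ?_
    rw [int_pow_I, avg_min]
    · rw [Finset.card_union_of_disjoint, Finset.card_image_of_injective _ hβ]
      rw [Finset.disjoint_right]
      intro a ha
      obtain ⟨k, _, rfl⟩ := Finset.mem_image.1 ha
      exact hD k
    · intro h
      rcases Finset.mem_union.1 h with h | h
      · exact hD i h
      · obtain ⟨k, hk, h⟩ := Finset.mem_image.1 h
        exact (Finset.mem_filter.1 hk).2.1 (hβ h)
  simp only [hG]
  rw [avg_integral _ _ (fun B => cont_int _ (by fun_prop))]
  set F : (ι → I) → (ι → I) → ℝ := fun t x => Real.exp (-(∑ g ∈ S, (1 - W g)) * ∑ i, (x i:ℝ)) *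
      ∏ i, Real.exp (-(1-(t i:ℝ)) * (D0.card + ∑ k, (x k : ℝ) - x i)) with hF
  have hFc : Continuous (Function.uncurry F) := by
    rw [hF]
    simp only [Function.uncurry_def]
    fun_prop
  calc _ ≤ ∫ t, ∫ x, F t x := by
        refine integral_mono (cont_int _ ?_) (cont_int ((volume : Measure (ι → I)).prod (volume : Measure (ι → I))) hFc).integral_prod_left (fun t => FM1 γ β hγ hβ S hS W hW D0 t)
        unfold avg
        fun_prop
    _ = ∫ x, ∫ t, F t x := integral_integral_swap (cont_int _ hFc)
    _ ≤ _ := by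
        refine integral_mono (cont_int ((volume : Measure (ι → I)).prod (volume : Measure (ι → I))) hFc).integral_prod_right (cont_int _ ?_) ?_
        · apply Continuous.mul (by fun_prop)
          apply continuous_finset_prod
          intro i _
          apply Continuous.div (by fun_prop) (by fun_prop)
          intro x
          positivity
        · intro x
          simp only [hF]
          rw [integral_const_mul]
          refine mul_le_mul_of_nonneg_left ?_ (Real.exp_pos _).le
          rw [integral_fintype_prod_volume_eq_prod (fun i (t:I) => Real.exp (-(1-(t:ℝ)) * (D0.card + ∑ k, (x k : ℝ) - x i)))]
          refine Finset.prod_le_prod (fun i _ => integral_nonneg fun t => (Real.exp_pos _).le) fun i _ => ?_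
          apply int_exp_I
          have : (x i:ℝ) ≤ ∑ k, (x k:ℝ) := Finset.single_le_sum (f := fun k => (x k:ℝ)) (fun k _ => (x k).2.1) (mem_univ i)
          have : (0:ℝ) ≤ D0.card := by positivity
          linarith

theorem max_prod {ι : Type*} [Fintype ι] (x : ι → I) (κ : ℝ) (hκ : 0 ≤ κ) :
    ∏ i, (1 / max 1 (κ + ∑ k, (x k : ℝ) - x i)) ≤ Real.exp 2 * (1/(max 1 (κ + ∑ k, (x k : ℝ)))^(Fintype.card ι)) := by
  set A := κ + ∑ k, (x k : ℝ) with hA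
  set Y := max 1 A with hY
  have hY1 : 1 ≤ Y := le_max_left _ _
  have hYA : A ≤ Y := le_max_right _ _
  have h : ∀ i, 1 / max 1 (A - x i) ≤ (1/Y) * Real.exp (2 * (x i:ℝ)/Y) := by
    intro i
    set y := max 1 (A - (x i:ℝ)) with hy
    have h0 := (x i).2.1
    have h1 := (x i).2.2
    have hy1 : 1 ≤ y := le_max_left _ _
    have hyY : Y - x i ≤ y := by
      rw [sub_le_iff_le_add]
      refine max_le (by linarith) ?_
      have : A - x i ≤ y := le_max_right _ _
      linarith
    have h2 : Y / y ≤ 1 + 2 * (x i:ℝ)/Y := by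
      rw [div_le_iff₀ (by linarith)]
      have : Y * Y ≤ (Y + 2 * x i) * y := by nlinarith
      have h3 : (1 + 2 * (x i:ℝ)/Y) * y = ((Y + 2 * x i) * y)/Y := by field_simp
      rw [h3, le_div_iff₀ (by linarith)]
      exact this
    have h4 := Real.add_one_le_exp (2 * (x i:ℝ)/Y)
    have h5 : 1/y = (1/Y) * (Y/y) := by field_simp
    rw [h5]
    refine mul_le_mul_of_nonneg_left (by linarith) (by positivity)
  calc _ ≤ ∏ i, ((1/Y) * Real.exp (2 * (x i:ℝ)/Y)) := Finset.prod_le_prod (fun i _ => by positivity) fun i _ => h i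
    _ = (1/Y^(Fintype.card ι)) * Real.exp (∑ i, 2 * (x i:ℝ)/Y) := by
        rw [Finset.prod_mul_distrib, Real.exp_sum, Finset.prod_const, one_div_pow, Finset.card_univ]
    _ ≤ _ := by
        rw [mul_comm]
        refine mul_le_mul_of_nonneg_right ?_ (by positivity)
        rw [Real.exp_le_exp, ← Finset.sum_div, ← Finset.mul_sum, div_le_iff₀ (by linarith)]
        linarith

open Classical in
theorem FM {n : ℕ} {ι : Type*} [Fintype ι] (γ β : ι → Fin n)
    (hγ : Function.Injective γ) (hβ : Function.Injective β)
    (S : Finset (Fin n)) (hS : ∀ i, γ i ∉ S) (W : Fin n → ℝ) (hW : ∀ g ∈ S, 0 ≤ W g)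
    (D0 : Finset (Fin n)) (hD : ∀ i, β i ∉ D0) (E A : ℝ) (hA : 0 < A)
    (hb : ∀ s : ℝ, 0 ≤ s → Real.exp (-(∑ g ∈ S, (1 - W g)) * s) * (1/(max 1 (D0.card + s))^(Fintype.card ι))
      ≤ E * (1/(A+s)^(Fintype.card ι))) :
    avg (fun P : PrefProfile n =>
      (∏ i, ∏ g ∈ S, if P.2 (β i) g < P.2 (β i) (γ i) then W g else 1) *
      ∏ i, (if ∀ a ∈ D0 ∪ (univ.filter (fun k => k ≠ i ∧ P.2 (β k) (γ i) < P.2 (β k) (γ k))).image β,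
        P.1 (γ i) (β i) < P.1 (γ i) a then (1:ℝ) else 0)) ≤
    Real.exp 2 * E * ((A + Fintype.card ι)/(A * (Fintype.card ι).factorial)) := by
  refine (FM2 γ β hγ hβ S hS W hW D0 hD).trans ?_
  have hE : 0 ≤ E := by
    have := hb 0 le_rfl
    have h2 : 0 ≤ E * (1/(A+0)^(Fintype.card ι)) := le_trans (by positivity) this
    exact nonneg_of_mul_nonneg_left h2 (by positivity)
  have hs : ∀ x : ι → I, 0 ≤ ∑ i, (x i:ℝ) := fun x => Finset.sum_nonneg fun i _ => (x i).2.1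
  calc _ ≤ ∫ x : ι → I, (Real.exp 2 * E) * (1/(A + ∑ i, (x i:ℝ))^(Fintype.card ι)) := by
        refine integral_mono (cont_int _ ?_) (cont_int _ ?_) ?_
        · apply Continuous.mul (by fun_prop)
          apply continuous_finset_prod
          intro i _
          apply Continuous.div (by fun_prop) (by fun_prop)
          intro x
          positivity
        · apply Continuous.mul (by fun_prop)
          apply Continuous.div (by fun_prop) (by fun_prop)
          intro x
          have := hs x
          positivity
        · intro x
          have h1 := max_prod x D0.card (by positivity)
          have h2 := hb _ (hs x)
          simp only
          calc _ ≤ Real.exp (-(∑ g ∈ S, (1 - W g)) * ∑ i, (x i:ℝ)) * (Real.exp 2 * (1/(max 1 (D0.card + ∑ k, (x k : ℝ)))^(Fintype.card ι))) :=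
                mul_le_mul_of_nonneg_left h1 (Real.exp_pos _).le
            _ ≤ _ := by
                rw [mul_left_comm, mul_assoc]
                exact mul_le_mul_of_nonneg_left h2 (Real.exp_pos _).le
    _ ≤ _ := by
        rw [integral_const_mul]
        exact mul_le_mul_of_nonneg_left (simplex' A hA) (by positivity)

end HelperF

section HelperG
open Finset BigOperators

theorem mem_filter_aux {α : Type*} {p : α → Prop} {inst : DecidablePred p} {s : Finset α} {a : α}
    (h : a ∈ @Finset.filter α p inst s) : a ∈ s ∧ p a := Finset.mem_filter.1 h

open Classical in
theorem probF_one {n : ℕ} (z : Fin n) (M : Fin n ≃ Fin n) (k : ℕ) (hk : 1 ≤ k) (hkn : (n:ℝ) - 1 ≤ 4 * (k:ℝ)^2) :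
    avg (fun P : PrefProfile n => if EvF z P.2 P.1 M k then (1:ℝ) else 0) ≤
      Real.exp 3 * Real.exp (-((n:ℝ)-1)/(4*k)) * (2*n) / (n-1).factorial := by
  have hn1 : 1 ≤ n := Fin.pos z
  set m : ℕ := n - 1 with hm
  have hmn : (m:ℝ) = (n:ℝ) - 1 := by rw [hm]; push_cast [hn1]; ring
  have hk0 : (0:ℝ) < k := by exact_mod_cast hk
  set θ : ℝ := m / (8*(k:ℝ)^2) with hθ
  have hθ0 : 0 ≤ θ := by positivity
  have hθ1 : θ ≤ 1/2 := by
    rw [hθ, div_le_iff₀ (by positivity)]; linarith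
  set w : ℝ := 1 - θ with hw
  have hw0 : 0 < w := by linarith
  have hwe : Real.exp (-(2*θ)) ≤ w := by
    have h1 := Real.add_one_le_exp (2*θ)
    rw [Real.exp_neg, inv_le_comm₀ (Real.exp_pos _) hw0]
    refine le_trans ?_ h1
    rw [inv_le_comm₀ hw0 (by linarith), inv_le_iff_one_le_mul₀ (by linarith)]
    nlinarith
  let ι := {j : Fin n // j ≠ z}
  have hcard : Fintype.card ι = m := by
    simp [ι, hm]
  have hFM := FM (n := n) (ι := ι) (fun i => i.1) (fun i => M i.1) Subtype.val_injective
    (M.injective.comp Subtype.val_injective) {z} (fun i => by simpa using i.2) (fun _ => w)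
    (fun _ _ => hw0.le) {M z} (fun i => by simpa using i.2) (Real.exp (θ - m/(2*k))) (1/2) (by norm_num) (by
      intro s hs
      simp only [Finset.sum_singleton, Finset.card_singleton, Nat.cast_one, hcard]
      rw [max_eq_right (by linarith)]
      have h1 : ((1/2+s)/(1+s))^m ≤ Real.exp (-(m/(2*(1+s)))) := by
        have h2 : (1/2+s)/(1+s) ≤ Real.exp (-(1/(2*(1+s)))) := by
          have := Real.add_one_le_exp (-(1/(2*(1+s))))
          refine le_trans (le_of_eq ?_) this
          field_simp; ring
        calc _ ≤ (Real.exp (-(1/(2*(1+s)))))^m := pow_le_pow_left₀ (by positivity) h2 _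
          _ = _ := by rw [← Real.exp_nat_mul]; congr 1; field_simp
      have h3 : -(1-w)*s + -(m/(2*(1+s))) ≤ θ - m/(2*k) := by
        have : m/(2*(k:ℝ)) ≤ θ * (1+s) + m/(2*(1+s)) := by
          rw [hθ]
          have h4 : (m:ℝ)/(8*(k:ℝ)^2) * (1+s) + m/(2*(1+s)) - m/(2*(k:ℝ)) =
              m * ((1+s) - 2*k)^2/(8*(k:ℝ)^2*(1+s)) := by field_simp; ring
          have h5 : 0 ≤ m * ((1+s) - 2*k)^2/(8*(k:ℝ)^2*(1+s)) := by positivity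
          linarith
        rw [hw]; linarith
      have h6 : (1/(1+s)^m) = ((1/2+s)/(1+s))^m * (1/(1/2+s)^m) := by
        rw [div_pow]; field_simp
      rw [h6, ← mul_assoc]
      refine mul_le_mul_of_nonneg_right ?_ (by positivity)
      calc _ ≤ Real.exp (-(1-w)*s) * Real.exp (-(m/(2*(1+s)))) := by gcongr
        _ ≤ _ := by rw [← Real.exp_add]; exact Real.exp_le_exp.2 h3)
  have hle : avg (fun P : PrefProfile n => w^k * if EvF z P.2 P.1 M k then (1:ℝ) else 0) ≤
      Real.exp 2 * (Real.exp (θ - m/(2*k))) * ((1/2 + Fintype.card ι)/(1/2 * (Fintype.card ι).factorial)) := by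
    refine le_trans (avg_mono fun P => ?_) hFM
    by_cases hE : EvF z P.2 P.1 M k
    · rw [if_pos hE, mul_one]
      obtain ⟨h1, h2, h3⟩ := hE
      rw [Finset.prod_eq_one (f := fun i : ι => (if ∀ a ∈ {M z} ∪ _, _ then (1:ℝ) else 0)), mul_one]
      · simp only [Finset.prod_singleton]
        rw [← Finset.prod_filter, Finset.prod_const]
        refine pow_le_pow_of_le_one hw0.le (by linarith) (le_trans ?_ h3)
        refine Finset.card_le_card_of_injOn (fun i => i.1) ?_ (Subtype.val_injective.injOn)
        intro i hi
        simp only [Finset.coe_filter, mem_univ, true_and, Set.mem_ofPred_eq] at hi ⊢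
        exact ⟨i.2, hi⟩
      · intro i _
        rw [if_pos]
        intro a ha
        rcases Finset.mem_union.1 ha with h | h
        · rw [Finset.mem_singleton.1 h]; exact h1 i.1 i.2
        · obtain ⟨l, hl, rfl⟩ := Finset.mem_image.1 h
          have hl := mem_filter_aux hl
          replace hl := hl.2
          exact h2 l.1 i.1 l.2 i.2 (fun h => hl.1 (Subtype.ext h)) hl.2
    · rw [if_neg hE, mul_zero]
      refine mul_nonneg (Finset.prod_nonneg fun i _ => Finset.prod_nonneg fun g _ => ?_)
        (Finset.prod_nonneg fun i _ => ?_)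
      · split_ifs <;> linarith
      · split_ifs <;> norm_num
  rw [avg_const_mul, hcard] at hle
  have hwk : Real.exp (-(m/(4*k))) ≤ w^k := by
    calc Real.exp (-(m/(4*k))) = (Real.exp (-(2*θ)))^k := by
          rw [← Real.exp_nat_mul, hθ]; congr 1; field_simp; ring
      _ ≤ _ := pow_le_pow_left₀ (Real.exp_pos _).le hwe _
  set p := avg (fun P : PrefProfile n => if EvF z P.2 P.1 M k then (1:ℝ) else 0) with hp
  have hp0 : 0 ≤ p := avg_nonneg fun P => by split_ifs <;> norm_num
  have h7 : Real.exp (-(m/(4*k))) * p ≤ Real.exp 2 * (Real.exp (θ - m/(2*k))) * ((1/2 + m)/(1/2 * m.factorial)) :=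
    (mul_le_mul_of_nonneg_right hwk hp0).trans hle
  have h8 : p = Real.exp (m/(4*k)) * (Real.exp (-(m/(4*k))) * p) := by
    rw [← mul_assoc, ← Real.exp_add]; simp
  rw [h8]
  have hf : (0:ℝ) < m.factorial := by exact_mod_cast m.factorial_pos
  calc _ ≤ Real.exp (m/(4*k)) * (Real.exp 2 * (Real.exp (θ - m/(2*k))) * ((1/2 + m)/(1/2 * m.factorial))) := by gcongr
    _ = (Real.exp (m/(4*k)) * (Real.exp 2 * (Real.exp (θ - m/(2*k))))) * ((2*m+1)/m.factorial) := by field_simp; ring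
    _ ≤ (Real.exp 3 * Real.exp (-((n:ℝ)-1)/(4*k))) * ((2*n)/m.factorial) := by
        gcongr ?_ * (?_/_)
        · rw [← Real.exp_add, ← Real.exp_add, ← Real.exp_add, Real.exp_le_exp]
          rw [← hmn]
          have : (m:ℝ)/(4*k) - m/(2*k) = -m/(4*k) := by field_simp; ring
          linarith
        · linarith
    _ = _ := by ring

open Classical in
theorem probI_one {n : ℕ} (hn : 2 ≤ n) (z g : Fin n) (M : Fin n ≃ Fin n) (k : ℕ) :
    avg (fun P : PrefProfile n => if EvI z P.2 P.1 M g k then (1:ℝ) else 0) ≤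
      Real.exp 3 * (2/3)^(k-2) * n^2 / (n-2).factorial := by
  have hn0 : (0:ℝ) < n := by exact_mod_cast (by omega : 0 < n)
  by_cases hgz : g = z
  · have : ∀ P : PrefProfile n, ¬ EvI z P.2 P.1 M g k := fun P h => h.1 hgz
    simp only [this, if_false, avg_const]
    positivity
  set m : ℕ := n - 2 with hm
  have hmn : (m:ℝ) = (n:ℝ) - 2 := by rw [hm]; push_cast [hn]; ring
  let ι := {j : Fin n // j ≠ z ∧ j ≠ g}
  have hcard : Fintype.card ι = m := by
    have : Fintype.card ι = (univ.filter fun j : Fin n => j ≠ z ∧ j ≠ g).card := Fintype.card_subtype _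
    rw [this]
    have : (univ.filter fun j : Fin n => j ≠ z ∧ j ≠ g) = univ \ {z, g} := by
      ext j; simp
    rw [this, Finset.card_sdiff_of_subset (subset_univ _), Finset.card_pair (Ne.symm hgz)]
    simp [hm]
  set W : Fin n → ℝ := fun j => if j = z then 3/2 else 0 with hW
  have hFM := FM (n := n) (ι := ι) (fun i => i.1) (fun i => M i.1) Subtype.val_injective
    (M.injective.comp Subtype.val_injective) {z, g} (fun i => by simpa using i.2) W
    (fun j _ => by rw [hW]; dsimp only; split_ifs <;> norm_num) ∅ (fun i => by simp) (Real.exp 1) (1/n) (by positivity) (by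
      intro s hs
      rw [Finset.sum_pair (Ne.symm hgz)]
      simp only [hW, if_true, if_neg hgz, Finset.card_empty, hcard, Nat.cast_zero, zero_add]
      set Y := max 1 s with hY
      have hY1 : 1 ≤ Y := le_max_left _ _
      have hYs : s ≤ Y := le_max_right _ _
      have h1 : ((1/n+s)/Y)^m ≤ Real.exp 1 := by
        have h2 : (1/n+s)/Y ≤ Real.exp (1/n) := by
          have := Real.add_one_le_exp (1/(n:ℝ))
          refine le_trans ?_ this
          rw [div_le_iff₀ (by linarith)]
          have : 0 < 1/(n:ℝ) := by positivity
          nlinarith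
        calc _ ≤ (Real.exp (1/n))^m := pow_le_pow_left₀ (by positivity) h2 _
          _ ≤ _ := by
            rw [← Real.exp_nat_mul, Real.exp_le_exp, mul_one_div, div_le_one hn0]; linarith
      have h6 : (1/Y^m) = ((1/n+s)/Y)^m * (1/(1/n+s)^m) := by
        rw [div_pow]; field_simp
      rw [h6, ← mul_assoc]
      refine mul_le_mul_of_nonneg_right ?_ (by positivity)
      calc _ ≤ 1 * Real.exp 1 := by
            gcongr
            rw [Real.exp_le_one_iff]; linarith
        _ = _ := one_mul _)
  have hle : avg (fun P : PrefProfile n => (3/2:ℝ)^(k-2) * if EvI z P.2 P.1 M g k then (1:ℝ) else 0) ≤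
      Real.exp 2 * (Real.exp 1) * ((1/n + Fintype.card ι)/(1/n * (Fintype.card ι).factorial)) := by
    refine le_trans (avg_mono fun P => ?_) hFM
    by_cases hE : EvI z P.2 P.1 M g k
    · rw [if_pos hE, mul_one]
      obtain ⟨_, h1, h2, h3⟩ := hE
      rw [Finset.prod_eq_one (f := fun i : ι => (if ∀ a ∈ ∅ ∪ _, _ then (1:ℝ) else 0)), mul_one]
      · have h4 : ∀ i : ι, (∏ j ∈ {z, g}, if P.2 (M i.1) j < P.2 (M i.1) i.1 then W j else 1) =
            if P.2 (M i.1) z < P.2 (M i.1) i.1 then 3/2 else (1:ℝ) := by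
          intro i
          rw [Finset.prod_pair (Ne.symm hgz), if_neg (h1 i.1 i.2.1), mul_one]
          simp [hW]
        simp only [h4]
        rw [← Finset.prod_filter, Finset.prod_const]
        refine pow_le_pow_right₀ (by norm_num) ?_
        have h5 : (univ.filter fun i => i ≠ z ∧ P.2 (M i) z < P.2 (M i) i) ⊆
            insert g ((univ.filter fun i : ι => P.2 (M i.1) z < P.2 (M i.1) i.1).image (fun i => i.1)) := by
          intro i hi
          simp only [mem_filter, mem_univ, true_and] at hi
          by_cases hig : i = g
          · simp [hig]
          · apply Finset.mem_insert_of_mem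
            exact Finset.mem_image.2 ⟨⟨i, hi.1, hig⟩, by simpa using hi.2, rfl⟩
        have h6 := (Finset.card_le_card h5).trans (Finset.card_insert_le _ _)
        have h7 := h6.trans (Nat.add_le_add_right Finset.card_image_le 1)
        have h8 : k ≤ 1 + ((univ.filter fun i : ι => P.2 (M i.1) z < P.2 (M i.1) i.1).card + 1) :=
          h3.trans (Nat.add_le_add_left (by convert h7) 1)
        omega
      · intro i _
        rw [if_pos]
        intro a ha
        rw [Finset.empty_union] at ha
        obtain ⟨l, hl, rfl⟩ := Finset.mem_image.1 ha
        have hl := mem_filter_aux hl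
        replace hl := hl.2
        exact h2 l.1 i.1 l.2.1 i.2.1 (fun h => hl.1 (Subtype.ext h)) hl.2
    · rw [if_neg hE, mul_zero]
      refine mul_nonneg (Finset.prod_nonneg fun i _ => Finset.prod_nonneg fun g _ => ?_)
        (Finset.prod_nonneg fun i _ => ?_)
      · simp only [hW]; split_ifs <;> norm_num
      · split_ifs <;> norm_num
  rw [avg_const_mul, hcard, ← Real.exp_add] at hle
  norm_num only at hle
  set p := avg (fun P : PrefProfile n => if EvI z P.2 P.1 M g k then (1:ℝ) else 0) with hp
  have hf : (0:ℝ) < m.factorial := by exact_mod_cast m.factorial_pos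
  have h8 : p = (2/3)^(k-2) * ((3/2)^(k-2) * p) := by
    rw [← mul_assoc, ← mul_pow]; norm_num
  rw [h8]
  calc _ ≤ (2/3)^(k-2) * (Real.exp 3 * ((1/n + m)/(1/n * m.factorial))) := by
        gcongr
    _ = Real.exp 3 * (2/3)^(k-2) * (1 + m * n) / m.factorial := by field_simp
    _ ≤ _ := by
        gcongr
        rw [hmn]; nlinarith

open Classical in
theorem probF {n : ℕ} (z : Fin n) (k : ℕ) (hk : 1 ≤ k) (hkn : (n:ℝ) - 1 ≤ 4 * (k:ℝ)^2) :
    avg (fun P : PrefProfile n => if ∃ M, EvF z P.2 P.1 M k then (1:ℝ) else 0) ≤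
      Real.exp 3 * (2*n^2) * Real.exp (-((n:ℝ)-1)/(4*k)) := by
  have hn1 : 1 ≤ n := Fin.pos z
  calc _ ≤ avg (fun P : PrefProfile n => ∑ M : Fin n ≃ Fin n, if EvF z P.2 P.1 M k then (1:ℝ) else 0) := by
        refine avg_mono fun P => ?_
        split_ifs with h
        · obtain ⟨M, hM⟩ := h
          calc (1:ℝ) = if EvF z P.2 P.1 M k then (1:ℝ) else 0 := by rw [if_pos hM]
            _ ≤ _ := Finset.single_le_sum (f := fun M => if EvF z P.2 P.1 M k then (1:ℝ) else 0)
              (fun M _ => by split_ifs <;> norm_num) (mem_univ M)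
        · exact Finset.sum_nonneg fun M _ => by split_ifs <;> norm_num
    _ ≤ ∑ M : Fin n ≃ Fin n, Real.exp 3 * Real.exp (-((n:ℝ)-1)/(4*k)) * (2*n) / (n-1).factorial := by
        rw [avg_sum]
        exact Finset.sum_le_sum fun M _ => probF_one z M k hk hkn
    _ = _ := by
        rw [Finset.sum_const, Finset.card_univ, Fintype.card_perm, Fintype.card_fin, nsmul_eq_mul]
        obtain ⟨m, rfl⟩ : ∃ m, n = m+1 := ⟨n-1, by omega⟩
        rw [Nat.add_sub_cancel, Nat.factorial_succ]
        have hf : (0:ℝ) < m.factorial := by exact_mod_cast m.factorial_pos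
        push_cast
        field_simp

open Classical in
theorem probI {n : ℕ} (hn : 2 ≤ n) (z : Fin n) (k : ℕ) :
    avg (fun P : PrefProfile n => if ∃ M g, EvI z P.2 P.1 M g k then (1:ℝ) else 0) ≤
      Real.exp 3 * n^5 * (2/3)^(k-2) := by
  calc _ ≤ avg (fun P : PrefProfile n => ∑ M : (Fin n ≃ Fin n) × Fin n, if EvI z P.2 P.1 M.1 M.2 k then (1:ℝ) else 0) := by
        refine avg_mono fun P => ?_
        split_ifs with h
        · obtain ⟨M, g, hM⟩ := h
          calc (1:ℝ) = if EvI z P.2 P.1 (M,g).1 (M,g).2 k then (1:ℝ) else 0 := by rw [if_pos hM]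
            _ ≤ _ := Finset.single_le_sum (f := fun M : (Fin n ≃ Fin n) × Fin n => if EvI z P.2 P.1 M.1 M.2 k then (1:ℝ) else 0)
              (fun M _ => by split_ifs <;> norm_num) (mem_univ (M,g))
        · exact Finset.sum_nonneg fun M _ => by split_ifs <;> norm_num
    _ ≤ ∑ M : (Fin n ≃ Fin n) × Fin n, Real.exp 3 * (2/3)^(k-2) * n^2 / (n-2).factorial := by
        rw [avg_sum]
        exact Finset.sum_le_sum fun M _ => probI_one hn z M.2 M.1 k
    _ ≤ _ := by
        rw [Finset.sum_const, Finset.card_univ, Fintype.card_prod, Fintype.card_perm, Fintype.card_fin, nsmul_eq_mul]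
        obtain ⟨m, rfl⟩ : ∃ m, n = m+2 := ⟨n-2, by omega⟩
        rw [Nat.add_sub_cancel, Nat.factorial_succ, Nat.factorial_succ]
        have hf : (0:ℝ) < m.factorial := by exact_mod_cast m.factorial_pos
        have hr : (0:ℝ) < (2/3)^(k-2) := by positivity
        have he := Real.exp_pos 3
        push_cast
        have h1 : (m + 1 + 1) * ((m + 1) * (m.factorial:ℝ)) * (m + 2) * (Real.exp 3 * (2/3)^(k-2) * (m+2)^2 / m.factorial)
          = Real.exp 3 * ((m+2)^4 * (m+1)) * (2/3)^(k-2) := by field_simp; ring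
        rw [h1]
        gcongr
        nlinarith [pow_pos (show (0:ℝ) < (m:ℝ)+2 by positivity) 4]

end HelperG

section HelperH
open Finset BigOperators

theorem exists_perm_of_nodup {n : ℕ} (t : List (Fin n)) (ht : t.Nodup) :
    ∃ e : Equiv.Perm (Fin n), ∀ i : Fin n, ∀ h : (i:ℕ) < t.length, e i = t[(i:ℕ)] := by
  classical
  let f : Fin n → Fin n := fun i => if h : (i:ℕ) < t.length then t[(i:ℕ)] else i
  have := Finset.exists_equiv_extend_of_card_eq (α := Fin n) (β := Fin n) (t := univ) (by simp)
    (s := univ.filter fun i : Fin n => (i:ℕ) < t.length) (f := f) (Finset.subset_univ _) (by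
      intro i hi j hj hij
      simp only [Finset.coe_filter, mem_univ, true_and, Set.mem_ofPred_eq] at hi hj
      simp only [f, dif_pos hi, dif_pos hj] at hij
      exact Fin.ext ((List.Nodup.getElem_inj_iff ht).1 hij))
  obtain ⟨g, hg⟩ := this
  refine ⟨g.trans (Equiv.subtypeUnivEquiv (fun x => Finset.mem_univ x)), fun i h => ?_⟩
  have := hg i (by simpa using h)
  simp only [f, dif_pos h] at this
  exact this

open Classical in
theorem rec_bounds {n : ℕ} (hn : 2 ≤ n) (z : Fin n) (B G : Fin n → Equiv.Perm (Fin n)) :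
    ∃ (e : Equiv.Perm (Fin n)) (k1 k2 : ℕ), k2 ≤ n ∧ (∃ M g, EvI z B G M g k1) ∧ (∃ M, EvF z B G M k2) ∧
      ∀ s : Equiv.Perm (Fin n),
        stableHusbandCount n (Function.update G z s, B) z ≤ (univ.filter fun i => IsRec (e.trans s) i).card ∧
        (univ.filter fun i : Fin n => (k1 ≤ (i:ℕ) ∧ (i:ℕ) < k2) ∧ IsRec (e.trans s) i).card ≤
          stableHusbandCount n (Function.update G z s, B) z := by
  obtain ⟨t1, t2, hnd, hA, hB, hI, hF⟩ := process hn z B G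
  obtain ⟨e, he⟩ := exists_perm_of_nodup _ hnd
  have hlen : (t1++t2).length ≤ n := by simpa using hnd.length_le_card
  refine ⟨e, t1.length, (t1++t2).length, hlen, hI, hF, fun s => ⟨?_, ?_⟩⟩
  · unfold stableHusbandCount
    rw [Nat.card_eq_fintype_card, Fintype.card_subtype]
    refine Finset.card_le_card_of_injOn (fun b => e.symm b) ?_ e.symm.injective.injOn
    intro b hb
    simp only [Finset.coe_filter, mem_univ, true_and, Set.mem_ofPred_eq] at hb ⊢
    obtain ⟨M, hM, rfl⟩ := hb
    obtain ⟨l, r, hlr, hl⟩ := hA s M hM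
    have hll : l.length < (t1++t2).length := by rw [hlr]; simp
    have h1 : e ⟨l.length, by omega⟩ = M z := by
      rw [he _ hll]
      simp [hlr]
    rw [← h1, Equiv.symm_apply_apply]
    intro k hk
    have hk' : (k:ℕ) < l.length := hk
    simp only [Equiv.trans_apply]
    rw [h1, he k (by omega)]
    apply hl
    have : (t1++t2)[(k:ℕ)]'(by omega) = l[(k:ℕ)] := by
      simp [hlr, List.getElem_append_left hk']
    rw [this]
    exact List.getElem_mem _
  · unfold stableHusbandCount
    rw [Nat.card_eq_fintype_card, Fintype.card_subtype]
    refine Finset.card_le_card_of_injOn (fun b => e b) ?_ e.injective.injOn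
    intro i hi
    simp only [Finset.coe_filter, mem_univ, true_and, Set.mem_ofPred_eq] at hi ⊢
    obtain ⟨⟨h1, h2⟩, hrec⟩ := hi
    have h2' : (i:ℕ) - t1.length < t2.length := by
      rw [List.length_append] at h2; omega
    have hei : e i = t2[(i:ℕ) - t1.length] := by
      rw [he i h2, List.getElem_append_right h1]
    rw [hei]
    refine hB s (t2.take ((i:ℕ) - t1.length)) _ (t2.drop ((i:ℕ) - t1.length + 1)) ?_ ?_
    · simp
    · intro a ha
      have hta : t1 ++ t2.take ((i:ℕ) - t1.length) = (t1++t2).take i := by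
        rw [List.take_append, List.take_of_length_le h1]
      rw [hta] at ha
      obtain ⟨k, hk, rfl⟩ := List.mem_take_iff_getElem.1 ha
      have hk2 : k < i ∧ k < (t1++t2).length := by simpa using hk
      have := hrec ⟨k, by omega⟩ (by simpa [Fin.lt_def] using hk2.1)
      simp only [Equiv.trans_apply] at this
      rw [he ⟨k, by omega⟩ hk2.2] at this
      rw [← hei]
      exact this

end HelperH

section HelperI
open Finset BigOperators

open Classical in
theorem upper_s {n : ℕ} (hn : 2 ≤ n) (z : Fin n) (B G : Fin n → Equiv.Perm (Fin n)) (C : ℝ) (hC : 1 < C) :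
    avg (fun s : Equiv.Perm (Fin n) =>
      if C * Real.log n < (stableHusbandCount n (Function.update G z s, B) z : ℝ) then (1:ℝ) else 0) ≤
      Real.exp (C - 1) * (n:ℝ) ^ (-(C * Real.log C - C + 1)) := by
  obtain ⟨e, k1, k2, hk2, _, _, h⟩ := rec_bounds hn z B G
  have hn0 : (0:ℝ) < n := by exact_mod_cast (by omega : 0 < n)
  set L := Real.log n with hL
  have hlC : 0 < Real.log C := Real.log_pos hC
  have hC0 : 0 < C := by linarith
  calc _ ≤ avg (fun s : Equiv.Perm (Fin n) => Real.exp (-(C * L * Real.log C)) *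
        ∏ i : Fin n, if IsRec (e.trans s) i then C else 1) := by
        refine avg_mono fun s => ?_
        rw [← Finset.prod_filter, Finset.prod_const]
        split_ifs with hs
        · have h1 : C * L ≤ ((univ.filter fun i => IsRec (e.trans s) i).card : ℝ) :=
            hs.le.trans (by exact_mod_cast (h s).1)
          have h2 : C ^ (univ.filter fun i => IsRec (e.trans s) i).card =
              Real.exp ((univ.filter fun i => IsRec (e.trans s) i).card * Real.log C) := by
            rw [Real.exp_nat_mul, Real.exp_log hC0]
          rw [h2, ← Real.exp_add, Real.one_le_exp_iff]
          have := mul_le_mul_of_nonneg_right h1 hlC.le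
          linarith
        · positivity
    _ = Real.exp (-(C * L * Real.log C)) * ∏ i ∈ range n, (1 + (C - 1)/((i:ℝ)+1)) := by
        rw [avg_const_mul]
        congr 1
        rw [← avg_rec n (fun _ => C)]
        refine avg_equiv (Equiv.mk (fun s => e.trans s) (fun s => e.symm.trans s) ?_ ?_)
          (fun π : Equiv.Perm (Fin n) => ∏ i : Fin n, if IsRec π i then C else 1)
        · intro s; ext i; simp
        · intro s; ext i; simp
    _ ≤ Real.exp (-(C * L * Real.log C)) * Real.exp ((C-1) * (1 + L)) := by
        refine mul_le_mul_of_nonneg_left ?_ (Real.exp_pos _).le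
        calc _ ≤ ∏ i ∈ range n, Real.exp ((C - 1)/((i:ℝ)+1)) := by
              refine Finset.prod_le_prod (fun i _ => ?_) fun i _ => ?_
              · have : 0 ≤ (C-1)/((i:ℝ)+1) := div_nonneg (by linarith) (by positivity)
                linarith
              · have := Real.add_one_le_exp ((C - 1)/((i:ℝ)+1)); linarith
          _ ≤ _ := by
              rw [← Real.exp_sum, Real.exp_le_exp]
              have h3 := harmonic_le_one_add_log n
              have h4 : ∑ i ∈ range n, (C - 1)/((i:ℝ)+1) = (C-1) * ((harmonic n : ℚ) : ℝ) := by
                simp only [harmonic]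
                push_cast
                rw [Finset.mul_sum]
                rfl
              rw [h4]
              exact mul_le_mul_of_nonneg_left h3 (by linarith)
    _ = _ := by
        rw [Real.rpow_def_of_pos hn0, ← Real.exp_add, ← Real.exp_add]
        congr 1
        ring

open Classical in
theorem lower_s {n : ℕ} (hn : 2 ≤ n) (z : Fin n) (B G : Fin n → Equiv.Perm (Fin n)) (c lam : ℝ)
    (hlam : 0 < lam) (K1 K2 : ℕ) (hK : K1 ≤ K2) (hI : ¬ ∃ M g, EvI z B G M g (K1+1)) (hF : ¬ ∃ M, EvF z B G M K2) :
    avg (fun s : Equiv.Perm (Fin n) =>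
      if (stableHusbandCount n (Function.update G z s, B) z : ℝ) < c * Real.log n then (1:ℝ) else 0) ≤
      (n:ℝ) ^ (lam * c) * (((K1:ℝ)+1)/((K2:ℝ)+1)) ^ (1 - Real.exp (-lam)) := by
  obtain ⟨e, k1, k2, hk2, ⟨M1, g1, hI'⟩, ⟨M2, hF'⟩, h⟩ := rec_bounds hn z B G
  have hn0 : (0:ℝ) < n := by exact_mod_cast (by omega : 0 < n)
  have hk1 : k1 ≤ K1 := by
    by_contra hcon
    exact hI ⟨M1, g1, hI'.1, hI'.2.1, hI'.2.2.1, le_trans (by omega) hI'.2.2.2⟩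
  have hK2 : K2 < k2 := by
    by_contra hcon
    exact hF ⟨M2, hF'.1, hF'.2.1, le_trans hF'.2.2 (by omega)⟩
  set L := Real.log n with hL
  set w := Real.exp (-lam) with hw
  have hw0 : 0 < w := Real.exp_pos _
  have hw1 : w < 1 := by rw [hw, Real.exp_lt_one_iff]; linarith
  set v : ℕ → ℝ := fun i => if K1 ≤ i ∧ i < K2 then w else 1 with hv
  calc _ ≤ avg (fun s : Equiv.Perm (Fin n) => Real.exp (lam * c * L) *
        ∏ i : Fin n, if IsRec (e.trans s) i then v i else 1) := by
        refine avg_mono fun s => ?_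
        have h0 : ∀ i : Fin n, (if IsRec (e.trans s) i then v i else (1:ℝ)) =
            if ((K1 ≤ (i:ℕ) ∧ (i:ℕ) < K2) ∧ IsRec (e.trans s) i) then w else 1 := by
          intro i
          simp only [hv]
          by_cases h1 : IsRec (e.trans s) i <;> simp [h1]
        simp only [h0]
        rw [← Finset.prod_filter, Finset.prod_const]
        split_ifs with hs
        · set N := (univ.filter fun i : Fin n => (K1 ≤ (i:ℕ) ∧ (i:ℕ) < K2) ∧ IsRec (e.trans s) i).card with hN
          have h1 : N ≤ stableHusbandCount n (Function.update G z s, B) z := by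
            refine le_trans (Finset.card_le_card ?_) (h s).2
            intro i hi
            simp only [mem_filter, mem_univ, true_and] at hi ⊢
            exact ⟨⟨by omega, by omega⟩, hi.2⟩
          have h1' : (N:ℝ) ≤ c * L := le_trans (by exact_mod_cast h1) hs.le
          rw [hw, ← Real.exp_nat_mul, ← Real.exp_add, Real.one_le_exp_iff]
          nlinarith
        · positivity
    _ = Real.exp (lam * c * L) * ∏ i ∈ range n, (1 + (v i - 1)/((i:ℝ)+1)) := by
        rw [avg_const_mul]
        congr 1
        rw [← avg_rec n v]
        refine avg_equiv (Equiv.mk (fun s => e.trans s) (fun s => e.symm.trans s) ?_ ?_)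
          (fun π : Equiv.Perm (Fin n) => ∏ i : Fin n, if IsRec π i then v i else 1)
        · intro s; ext i; simp
        · intro s; ext i; simp
    _ ≤ Real.exp (lam * c * L) * Real.exp (-(1-w) * (Real.log ((K2:ℝ)+1) - Real.log ((K1:ℝ)+1))) := by
        refine mul_le_mul_of_nonneg_left ?_ (Real.exp_pos _).le
        calc _ ≤ ∏ i ∈ range n, Real.exp ((v i - 1)/((i:ℝ)+1)) := by
              refine Finset.prod_le_prod (fun i _ => ?_) fun i _ => ?_
              · have : -1 ≤ (v i - 1)/((i:ℝ)+1) := by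
                  rw [le_div_iff₀ (by positivity)]
                  have : 0 ≤ v i := by simp only [hv]; split_ifs <;> linarith
                  have : (0:ℝ) ≤ i := by positivity
                  linarith
                linarith
              · have := Real.add_one_le_exp ((v i - 1)/((i:ℝ)+1)); linarith
          _ ≤ _ := by
              rw [← Real.exp_sum, Real.exp_le_exp]
              have h4 : ∑ i ∈ range n, (v i - 1)/((i:ℝ)+1) ≤ ∑ i ∈ Finset.Ico K1 K2, (v i - 1)/((i:ℝ)+1) := by
                refine (Finset.sum_subset ?_ ?_).ge
                · intro i hi
                  rw [Finset.mem_Ico] at hi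
                  rw [Finset.mem_range]; omega
                · intro i _ hi
                  rw [Finset.mem_Ico] at hi
                  simp [hv, hi]
              refine h4.trans ?_
              have h5 : ∑ i ∈ Finset.Ico K1 K2, (v i - 1)/((i:ℝ)+1) ≤
                  ∑ i ∈ Finset.Ico K1 K2, (-(1-w)) * (Real.log (((i+1:ℕ):ℝ)+1) - Real.log ((i:ℝ)+1)) := by
                refine Finset.sum_le_sum fun i hi => ?_
                rw [Finset.mem_Ico] at hi
                simp only [hv, if_pos hi]
                have hi0 : (0:ℝ) < (i:ℝ)+1 := by positivity
                have h6 : Real.log (((i+1:ℕ):ℝ)+1) - Real.log ((i:ℝ)+1) ≤ 1/((i:ℝ)+1) := by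
                  rw [← Real.log_div (by positivity) (by positivity)]
                  refine (Real.log_le_sub_one_of_pos (by positivity)).trans (le_of_eq ?_)
                  push_cast; field_simp; ring
                have h7 : (w-1)/((i:ℝ)+1) = -(1-w) * (1/((i:ℝ)+1)) := by ring
                rw [h7]
                nlinarith
              refine h5.trans (le_of_eq ?_)
              rw [← Finset.mul_sum, Finset.sum_Ico_sub (fun i : ℕ => Real.log ((i:ℝ)+1)) hK]
    _ = _ := by
        rw [Real.rpow_def_of_pos hn0, Real.rpow_def_of_pos (by positivity), Real.log_div (by positivity) (by positivity)]
        congr 2 <;> ring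

open Classical in
theorem assemble {n : ℕ} (hn : 2 ≤ n) (z : Fin n) (c C lam : ℝ) (hC : 1 < C)
    (hlam : 0 < lam) (K1 K2 : ℕ) (hK : K1 ≤ K2) (hK2 : 1 ≤ K2) (hKn : (n:ℝ) - 1 ≤ 4 * (K2:ℝ)^2) :
    avg (fun P : PrefProfile n =>
      if (stableHusbandCount n P z : ℝ) < c * Real.log n ∨ C * Real.log n < (stableHusbandCount n P z : ℝ)
        then (1:ℝ) else 0) ≤
      Real.exp (C - 1) * (n:ℝ) ^ (-(C * Real.log C - C + 1)) +
      (n:ℝ) ^ (lam * c) * (((K1:ℝ)+1)/((K2:ℝ)+1)) ^ (1 - Real.exp (-lam)) +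
      Real.exp 3 * n^5 * (2/3)^(K1+1-2) + Real.exp 3 * (2*n^2) * Real.exp (-((n:ℝ)-1)/(4*K2)) := by
  set U := Real.exp (C - 1) * (n:ℝ) ^ (-(C * Real.log C - C + 1)) with hU
  set Lw := (n:ℝ) ^ (lam * c) * (((K1:ℝ)+1)/((K2:ℝ)+1)) ^ (1 - Real.exp (-lam)) with hLw
  have hLw0 : 0 ≤ Lw := by positivity
  have key : ∀ B G : Fin n → Equiv.Perm (Fin n), avg (fun s : Equiv.Perm (Fin n) =>
      if (stableHusbandCount n (Function.update G z s, B) z : ℝ) < c * Real.log n ∨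
        C * Real.log n < (stableHusbandCount n (Function.update G z s, B) z : ℝ) then (1:ℝ) else 0) ≤
      U + Lw + (if ∃ M g, EvI z B G M g (K1+1) then (1:ℝ) else 0) + (if ∃ M, EvF z B G M K2 then (1:ℝ) else 0) := by
    intro B G
    have h1 : avg (fun s : Equiv.Perm (Fin n) =>
      if (stableHusbandCount n (Function.update G z s, B) z : ℝ) < c * Real.log n ∨
        C * Real.log n < (stableHusbandCount n (Function.update G z s, B) z : ℝ) then (1:ℝ) else 0) ≤
      avg (fun s : Equiv.Perm (Fin n) =>
      if C * Real.log n < (stableHusbandCount n (Function.update G z s, B) z : ℝ) then (1:ℝ) else 0) +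
      avg (fun s : Equiv.Perm (Fin n) =>
      if (stableHusbandCount n (Function.update G z s, B) z : ℝ) < c * Real.log n then (1:ℝ) else 0) := by
      rw [← avg_add]
      refine avg_mono fun s => ?_
      by_cases ha : (stableHusbandCount n (Function.update G z s, B) z : ℝ) < c * Real.log n <;>
      by_cases hb : C * Real.log n < (stableHusbandCount n (Function.update G z s, B) z : ℝ) <;>
      simp [ha, hb]
    refine h1.trans ?_
    have h2 := upper_s hn z B G C hC
    by_cases hI : ∃ M g, EvI z B G M g (K1+1)
    · have h3 : avg (fun s : Equiv.Perm (Fin n) =>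
        if (stableHusbandCount n (Function.update G z s, B) z : ℝ) < c * Real.log n then (1:ℝ) else 0) ≤ 1 := by
        exact le_trans (avg_mono (g := fun _ => 1) fun s => by split_ifs <;> norm_num) (avg_const 1).le
      rw [if_pos hI]
      have : (0:ℝ) ≤ (if ∃ M, EvF z B G M K2 then (1:ℝ) else 0) := by split_ifs <;> norm_num
      linarith
    · by_cases hF : ∃ M, EvF z B G M K2
      · have h3 : avg (fun s : Equiv.Perm (Fin n) =>
          if (stableHusbandCount n (Function.update G z s, B) z : ℝ) < c * Real.log n then (1:ℝ) else 0) ≤ 1 := by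
          exact le_trans (avg_mono (g := fun _ => 1) fun s => by split_ifs <;> norm_num) (avg_const 1).le
        rw [if_pos hF, if_neg hI]
        linarith
      · have h3 := lower_s hn z B G c lam hlam K1 K2 hK hI hF
        rw [if_neg hF, if_neg hI]
        linarith
  have hI := probI hn z (K1+1)
  have hF := probF z K2 hK2 hKn
  calc _ ≤ avg (fun P : PrefProfile n => (U + Lw) + ((if ∃ M g, EvI z P.2 P.1 M g (K1+1) then (1:ℝ) else 0) +
        (if ∃ M, EvF z P.2 P.1 M K2 then (1:ℝ) else 0))) := by
        rw [avg_prod_left, avg_prod_left]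
        refine avg_mono fun B => ?_
        rw [avg_update z]
        refine avg_mono fun G => ?_
        refine (key B G).trans (le_of_eq ?_)
        simp only
        ring
    _ = (U + Lw) + (avg (fun P : PrefProfile n => if ∃ M g, EvI z P.2 P.1 M g (K1+1) then (1:ℝ) else 0) +
        avg (fun P : PrefProfile n => if ∃ M, EvF z P.2 P.1 M K2 then (1:ℝ) else 0)) := by
        rw [avg_add (fun _ => U + Lw), avg_const (U + Lw), avg_add]
    _ ≤ _ := by linarith

end HelperI

section HelperJ
open Finset BigOperators

theorem upper_exp (C : ℝ) (hC : 1 < C) : (C - 1) ^ 2 / 2 - (C - 1) ^ 3 / 6 ≤ C * Real.log C - C + 1 := by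
  let φ : ℝ → ℝ := fun x => x * Real.log x - x + 1 - ((x - 1) ^ 2 / 2 - (x - 1) ^ 3 / 6)
  have hd : ∀ x, 1 ≤ x → HasDerivAt φ (Real.log x - (x-1) + (x-1)^2/2) x := by
    intro x hx
    have h0 : HasDerivAt (fun x:ℝ => x - 1) 1 x := by simpa using (hasDerivAt_id x).sub_const 1
    have h1 := Real.hasDerivAt_mul_log (x := x) (by linarith)
    have h2 := ((h1.sub (hasDerivAt_id x)).add_const 1).sub (((h0.pow 2).div_const 2).sub ((h0.pow 3).div_const 6))
    have he : Real.log x - (x-1) + (x-1)^2/2 = Real.log x + 1 - 1 -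
      (((2:ℕ):ℝ) * (x - 1) ^ (2 - 1) * 1 / 2 - ((3:ℕ):ℝ) * (x - 1) ^ (3 - 1) * 1 / 6) := by
      norm_num; ring
    rw [he]
    exact h2
  have hm : MonotoneOn φ (Set.Ici 1) := by
    refine monotoneOn_of_deriv_nonneg (convex_Ici 1) ?_ ?_ ?_
    · intro x hx
      exact (hd x hx).continuousAt.continuousWithinAt
    · intro x hx
      rw [interior_Ici] at hx
      exact (hd x (le_of_lt hx)).differentiableAt.differentiableWithinAt
    · intro x hx
      rw [interior_Ici] at hx
      have hx : 1 < x := hx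
      rw [(hd x hx.le).deriv]
      have h3 := Real.le_log_one_add_of_nonneg (x := x - 1) (by linarith)
      have h4 : (x-1) - (x-1)^2/2 ≤ 2*(x-1)/((x-1)+2) := by
        rw [le_div_iff₀ (by linarith)]
        nlinarith [pow_pos (show 0 < x - 1 by linarith) 3]
      rw [add_sub_cancel] at h3
      linarith
  have := hm (Set.mem_Ici.2 le_rfl) (Set.mem_Ici.2 hC.le) hC.le
  simp only [φ, Real.log_one] at this
  norm_num at this
  linarith

theorem superpoly (a γ : ℝ) (ha : 0 < a) : ∃ K : ℝ, 0 < K ∧ ∀ n : ℕ, 1 ≤ n →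
    (n:ℝ)^5 * Real.exp (-(a * (n:ℝ)^((1:ℝ)/16))) ≤ K * (n:ℝ)^(-γ) := by
  obtain ⟨N, hN⟩ := exists_nat_ge (16*(5+γ))
  refine ⟨N.factorial / a^N, by positivity, fun n hn => ?_⟩
  have hn1 : (1:ℝ) ≤ n := by exact_mod_cast hn
  have hn0 : (0:ℝ) < n := by linarith
  set y := (n:ℝ)^((1:ℝ)/16) with hy
  have hy0 : 0 < y := by positivity
  have h1 := Real.pow_div_factorial_le_exp (a*y) (by positivity) N
  have h2 : (n:ℝ)^((5:ℝ)+γ) ≤ y^N := by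
    rw [hy, ← Real.rpow_mul_natCast hn0.le]
    exact Real.rpow_le_rpow_of_exponent_le hn1 (by linarith)
  have h3 : (n:ℝ)^5 = (n:ℝ)^((5:ℝ)+γ) * (n:ℝ)^(-γ) := by
    rw [← Real.rpow_add hn0, ← Real.rpow_natCast]; norm_num
  rw [h3, Real.exp_neg]
  have hf : (0:ℝ) < N.factorial := by exact_mod_cast N.factorial_pos
  have h4 : y^N * (Real.exp (a*y))⁻¹ ≤ N.factorial / a^N := by
    rw [← div_eq_mul_inv, div_le_div_iff₀ (Real.exp_pos _) (by positivity)]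
    rw [div_le_iff₀ hf, mul_pow] at h1
    linarith
  calc _ = ((n:ℝ)^((5:ℝ)+γ) * (Real.exp (a*y))⁻¹) * (n:ℝ)^(-γ) := by ring
    _ ≤ (y^N * (Real.exp (a*y))⁻¹) * (n:ℝ)^(-γ) := by gcongr
    _ ≤ _ := by gcongr

open Classical in
theorem card_eq_avg {α : Type*} [Fintype α] (p : α → Prop) :
    (Nat.card {x // p x} : ℝ) / (Nat.card α : ℝ) = avg (fun x => if p x then (1:ℝ) else 0) := by
  unfold avg
  rw [Nat.card_eq_fintype_card, Nat.card_eq_fintype_card, Fintype.card_subtype]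
  simp

theorem main_aux (c C γ : ℝ)
    (hc0 : 0 < c) (hc : c < 1 / 2) (hC : 1 < C) (hγ0 : 0 < γ)
    (hγ1 : γ < (1 - 2 * c) ^ 2 / 2) (hγ2 : γ < (C - 1) ^ 2 / 2 - (C - 1) ^ 3 / 6) :
    ∃ K : ℝ, 0 < K ∧ ∀ n : ℕ, ∀ _ : 2 ≤ n, ∀ z : Fin n,
      (Nat.card {P : PrefProfile n //
          (stableHusbandCount n P z : ℝ) < c * Real.log n ∨
          C * Real.log n < (stableHusbandCount n P z : ℝ)} : ℝ) /
        (Nat.card (PrefProfile n) : ℝ) ≤ K * (n : ℝ) ^ (-γ) := by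
  obtain ⟨KI, hKI0, hKI⟩ := superpoly (1/3) γ (by norm_num)
  obtain ⟨KF, hKF0, hKF⟩ := superpoly (1/16) γ (by norm_num)
  refine ⟨Real.exp (C-1) + 2 + Real.exp 3 * Real.exp 1 * KI + Real.exp 3 * 2 * KF, by positivity, fun n hn z => ?_⟩
  rw [card_eq_avg]
  have hn2 : (2:ℝ) ≤ n := by exact_mod_cast hn
  have hn1 : (1:ℝ) ≤ n := by linarith
  have hn0 : (0:ℝ) < n := by linarith
  set y := (n:ℝ)^((1:ℝ)/16) with hy
  set Y := (n:ℝ)^((15:ℝ)/16) with hY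
  have hy1 : 1 ≤ y := Real.one_le_rpow hn1 (by norm_num)
  have hyY : y ≤ Y := Real.rpow_le_rpow_of_exponent_le hn1 (by norm_num)
  have hyYn : y * Y = n := by
    rw [hy, hY, ← Real.rpow_add hn0]; norm_num
  set K1 := ⌊y⌋₊ with hK1
  set K2 := ⌈Y⌉₊ with hK2
  have hK1a : (K1:ℝ) ≤ y := Nat.floor_le (by linarith)
  have hK1b : y < K1 + 1 := Nat.lt_floor_add_one y
  have hK2a : Y ≤ K2 := Nat.le_ceil Y
  have hK2b : (K2:ℝ) < Y + 1 := Nat.ceil_lt_add_one (by linarith)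
  have hK11 : 1 ≤ K1 := Nat.one_le_floor_iff _ |>.2 hy1
  have hK12 : K1 ≤ K2 := by exact_mod_cast hK1a.trans (hyY.trans hK2a)
  have hlam : 0 < 2 - 2*c := by linarith
  have hA := assemble hn z c C (2-2*c) hC hlam K1 K2 hK12 (hK11.trans hK12) (by nlinarith)
  refine le_trans (le_of_eq ?_) (hA.trans ?_)
  · congr 1
    ext P
    congr
  have hg0 : 0 < (n:ℝ)^(-γ) := by positivity
  have t1 : Real.exp (C - 1) * (n:ℝ) ^ (-(C * Real.log C - C + 1)) ≤ Real.exp (C-1) * (n:ℝ)^(-γ) := by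
    gcongr
    · have := upper_exp C hC; linarith
  have t2 : (n:ℝ) ^ ((2-2*c) * c) * (((K1:ℝ)+1)/((K2:ℝ)+1)) ^ (1 - Real.exp (-(2-2*c))) ≤ 2 * (n:ℝ)^(-γ) := by
    set w := Real.exp (-(2-2*c)) with hw
    have hw0 : 0 < w := Real.exp_pos _
    have hw1 : w ≤ 10/27 := by
      have h1 : w ≤ Real.exp (-1) := Real.exp_le_exp.2 (by linarith)
      have h2 : Real.exp (-1) ≤ 10/27 := by
        rw [Real.exp_neg, inv_le_comm₀ (Real.exp_pos _) (by norm_num)]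
        have := Real.exp_one_gt_d9
        norm_num; linarith
      linarith
    have h3 : ((K1:ℝ)+1)/((K2:ℝ)+1) ≤ 2 * (n:ℝ)^(-(7/8:ℝ)) := by
      have h4 : (n:ℝ)^(-(7/8:ℝ)) = y / Y := by
        rw [hy, hY, ← Real.rpow_sub hn0]; norm_num
      rw [h4, ← mul_div_assoc]
      exact div_le_div₀ (by linarith) (by linarith) (by linarith) (by linarith)
    calc _ ≤ (n:ℝ) ^ ((2-2*c) * c) * (2 * (n:ℝ)^(-(7/8:ℝ)))^(1-w) := by
          gcongr
          linarith
      _ = 2^(1-w) * (n:ℝ)^((2-2*c)*c + (-(7/8:ℝ))*(1-w)) := by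
          rw [Real.mul_rpow (by norm_num) (by positivity), ← Real.rpow_mul hn0.le, Real.rpow_add hn0]
          ring
      _ ≤ 2 * (n:ℝ)^(-γ) := by
          gcongr
          · calc (2:ℝ)^(1-w) ≤ 2^(1:ℝ) := Real.rpow_le_rpow_of_exponent_le (by norm_num) (by linarith)
              _ = 2 := by norm_num
          · nlinarith
  have t3 : Real.exp 3 * (n:ℝ)^5 * (2/3)^(K1+1-2) ≤ Real.exp 3 * Real.exp 1 * KI * (n:ℝ)^(-γ) := by
    have h5 := hKI n (by omega)
    have h6 : (2/3:ℝ)^(K1+1-2) ≤ Real.exp 1 * Real.exp (-(1/3 * y)) := by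
      have h7 : (2/3:ℝ) ≤ Real.exp (-(1/3)) := by
        have := Real.add_one_le_exp (-(1/3:ℝ)); linarith
      calc _ ≤ (Real.exp (-(1/3)))^(K1+1-2) := pow_le_pow_left₀ (by norm_num) h7 _
        _ ≤ _ := by
          rw [← Real.exp_nat_mul, ← Real.exp_add, Real.exp_le_exp]
          have h8 : ((K1+1-2:ℕ):ℝ) = (K1:ℝ) - 1 := by
            rw [Nat.cast_sub (by omega)]; push_cast; ring
          rw [h8]; linarith
    calc _ ≤ Real.exp 3 * (n:ℝ)^5 * (Real.exp 1 * Real.exp (-(1/3 * y))) := by gcongr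
      _ = Real.exp 3 * Real.exp 1 * ((n:ℝ)^5 * Real.exp (-(1/3 * y))) := by ring
      _ ≤ Real.exp 3 * Real.exp 1 * (KI * (n:ℝ)^(-γ)) := by gcongr
      _ = _ := by ring
  have t4 : Real.exp 3 * (2*(n:ℝ)^2) * Real.exp (-((n:ℝ)-1)/(4*K2)) ≤ Real.exp 3 * 2 * KF * (n:ℝ)^(-γ) := by
    have h5 := hKF n (by omega)
    have h6 : -((n:ℝ)-1)/(4*K2) ≤ -(1/16 * y) := by
      have hK0 : (0:ℝ) < K2 := by linarith
      rw [div_le_iff₀ (by positivity)]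
      have : (K2:ℝ) ≤ 2 * Y := by linarith
      nlinarith
    have h7 : (n:ℝ)^2 ≤ (n:ℝ)^5 := pow_le_pow_right₀ hn1 (by norm_num)
    calc _ ≤ Real.exp 3 * (2*(n:ℝ)^5) * Real.exp (-(1/16 * y)) := by gcongr
      _ = Real.exp 3 * 2 * ((n:ℝ)^5 * Real.exp (-(1/16 * y))) := by ring
      _ ≤ Real.exp 3 * 2 * (KF * (n:ℝ)^(-γ)) := by gcongr
      _ = _ := by ring
  have : (Real.exp (C-1) + 2 + Real.exp 3 * Real.exp 1 * KI + Real.exp 3 * 2 * KF) * (n:ℝ)^(-γ) =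
    Real.exp (C-1) * (n:ℝ)^(-γ) + 2 * (n:ℝ)^(-γ) + Real.exp 3 * Real.exp 1 * KI * (n:ℝ)^(-γ) + Real.exp 3 * 2 * KF * (n:ℝ)^(-γ) := by ring
  rw [this]
  linarith

end HelperJ

/-- **Quantitative refinement of the main theorem.** Fix constants `0 < c < 1/2`,
`C > 1` and `γ > 0` with `γ < (1 - 2c)²/2` and `γ < (C - 1)²/2 - (C - 1)³/6`.
Under a uniformly random preference profile for `n` girls and `n` boys
(probability = number of favorable profiles divided by the total number of
profiles), there is a constant `K > 0` such that for all `n ≥ 2` the number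
`Hₙ` of stable husbands of girl `0` satisfies
`Pr(Hₙ < c ln n ∨ Hₙ > C ln n) ≤ K n^(-γ)`. -/
theorem main_theorem_quantitative (c C γ : ℝ)
    (hc0 : 0 < c) (hc : c < 1 / 2) (hC : 1 < C) (hγ0 : 0 < γ)
    (hγ1 : γ < (1 - 2 * c) ^ 2 / 2) (hγ2 : γ < (C - 1) ^ 2 / 2 - (C - 1) ^ 3 / 6) :
    ∃ K : ℝ, 0 < K ∧ ∀ n : ℕ, ∀ hn : 2 ≤ n,
      (Nat.card {P : PrefProfile n //
          (stableHusbandCount n P ⟨0, by omega⟩ : ℝ) < c * Real.log n ∨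
          C * Real.log n < (stableHusbandCount n P ⟨0, by omega⟩ : ℝ)} : ℝ) /
        (Nat.card (PrefProfile n) : ℝ) ≤ K * (n : ℝ) ^ (-γ) := by
  obtain ⟨K, hK, h⟩ := main_aux c C γ hc0 hc hC hγ0 hγ1 hγ2
  exact ⟨K, hK, fun n hn => h n hn ⟨0, by omega⟩⟩
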